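/- arXiv:2508.09723 — 3 statements merged into one kernel-verified Lean document; each statement's English description precedes it below -/
import Mathlib

section
/- For all integers k ≥ 0 and all integers n ≥ 0, d_{7k}(7n + 5) ≡ 0 (mod 7). -/
noncomputable section

/-- `J b = ∏_{k=1}^∞ (1 - q^{b·k})` as a formal power series with integer coefficients. -/
def J (b : ℕ) : PowerSeries ℤ :=
  PowerSeries.mk fun n =>
    PowerSeries.coeff n
      (∏ k ∈ Finset.range (n + 1), (1 - (PowerSeries.X : PowerSeries ℤ) ^ (b * (k + 1))))

namespace Aux

open Finset

/-- Gaussian binomial `[a+b; a]` by recursion. -/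
def G {R : Type*} [CommRing R] (q : R) : ℕ → ℕ → R
  | 0, _ => 1
  | _ + 1, 0 => 1
  | a + 1, b + 1 => G q a (b + 1) + q ^ (a + 1) * G q (a + 1) b

/-- `(q;q)_n` -/
def Q {R : Type*} [CommRing R] (q : R) (n : ℕ) : R := ∏ k ∈ range n, (1 - q ^ (k + 1))

section
variable {R : Type*} [CommRing R] (q : R)

lemma G_zero_left (b : ℕ) : G q 0 b = 1 := by simp [G]

lemma G_zero_right (a : ℕ) : G q a 0 = 1 := by cases a <;> simp [G]

lemma G_succ (a b : ℕ) :
    G q (a + 1) (b + 1) = G q a (b + 1) + q ^ (a + 1) * G q (a + 1) b := by simp [G]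

lemma Q_succ (n : ℕ) : Q q (n + 1) = Q q n * (1 - q ^ (n + 1)) := by
  simp [Q, prod_range_succ]

lemma Q_zero : Q q 0 = 1 := by simp [Q]

lemma G_mul (a b : ℕ) : G q a b * Q q a * Q q b = Q q (a + b) := by
  induction a generalizing b with
  | zero => simp [G_zero_left, Q_zero]
  | succ a iha =>
    induction b with
    | zero => simp [G_zero_right, Q_zero]
    | succ b ihb =>
      have h1 := iha (b + 1)
      have h2 : Q q (a + 1 + (b + 1)) = Q q (a + (b + 1)) * (1 - q ^ (a + b + 1 + 1)) := by
        rw [show a + 1 + (b + 1) = (a + (b + 1)) + 1 by ring, Q_succ]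
        ring_nf
      have h3 : a + 1 + b = a + (b + 1) := by ring
      rw [h3] at ihb
      rw [h2, G_succ, add_mul, add_mul]
      have e1 : G q a (b + 1) * Q q (a + 1) * Q q (b + 1)
          = (1 - q ^ (a + 1)) * Q q (a + (b + 1)) := by
        rw [← h1, Q_succ q a]; ring
      have e2 : q ^ (a + 1) * G q (a + 1) b * Q q (a + 1) * Q q (b + 1)
          = q ^ (a + 1) * (1 - q ^ (b + 1)) * Q q (a + (b + 1)) := by
        rw [← ihb, Q_succ q b]; ring
      rw [e1, e2]; ring

lemma sum_G (N : ℕ) (f : ℕ → ℕ → R) :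
    ∑ p ∈ HasAntidiagonal.antidiagonal (N + 1), G q p.1 p.2 * f p.1 p.2 =
      ∑ p ∈ HasAntidiagonal.antidiagonal N, G q p.1 p.2 * (f (p.1 + 1) p.2 + q ^ p.1 * f p.1 (p.2 + 1)) := by
  let G1 : ℕ → ℕ → R := fun a b => match a with
    | 0 => 0
    | a + 1 => G q a b
  let G2 : ℕ → ℕ → R := fun a b => match b with
    | 0 => 0
    | b + 1 => q ^ a * G q a b
  have h : ∀ p ∈ HasAntidiagonal.antidiagonal (N + 1), G q p.1 p.2 * f p.1 p.2
      = G1 p.1 p.2 * f p.1 p.2 + G2 p.1 p.2 * f p.1 p.2 := by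
    rintro ⟨a, b⟩ hp
    rw [Finset.HasAntidiagonal.mem_antidiagonal] at hp
    rw [← add_mul]
    congr 1
    rcases a with _ | a <;> rcases b with _ | b
    · simp at hp
    · simp [G1, G2, G_zero_left]
    · simp [G1, G2, G_zero_right]
    · simp [G1, G2, G_succ]
  rw [sum_congr rfl h, sum_add_distrib, Nat.sum_antidiagonal_succ, Nat.sum_antidiagonal_succ']
  simp only [G1, G2, zero_mul, zero_add]
  rw [← sum_add_distrib]
  refine sum_congr rfl fun p _ => ?_
  ring

lemma qbinom (N : ℕ) (x y : R) :
    ∏ k ∈ range N, (y + x * q ^ k) =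
      ∑ p ∈ HasAntidiagonal.antidiagonal N, G q p.1 p.2 * (q ^ (p.1.choose 2) * y ^ p.2 * x ^ p.1) := by
  induction N generalizing x with
  | zero => simp [G_zero_left]
  | succ N ih =>
    rw [sum_G q N (fun a b => q ^ (a.choose 2) * y ^ b * x ^ a), prod_range_succ']
    have : ∀ k ∈ range N, y + x * q ^ (k + 1) = y + (x * q) * q ^ k := fun k _ => by ring
    rw [prod_congr rfl this, ih, sum_mul]
    refine sum_congr rfl fun p _ => ?_
    have : (p.1 + 1).choose 2 = p.1 + p.1.choose 2 := by
      rw [Nat.choose_succ_succ']; simp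
    rw [this]
    ring

lemma prod_left (n : ℕ) : ∏ k ∈ range n, (q ^ n + (-1) * q ^ k)
    = (-1) ^ n * q ^ (n.choose 2) * Q q n := by
  have h : ∀ k ∈ range n, q ^ n + (-1) * q ^ k = (-1) * q ^ k * (1 - q ^ (n - 1 - k + 1)) := by
    intro k hk
    rw [mem_range] at hk
    have : q ^ n = q ^ k * q ^ (n - 1 - k + 1) := by rw [← pow_add]; congr 1; omega
    rw [this]; ring
  rw [prod_congr rfl h, prod_mul_distrib, prod_mul_distrib, prod_range_reflect
    (fun k => 1 - q ^ (k + 1)), prod_const, card_range, prod_pow_eq_pow_sum, sum_range_id,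
    Nat.choose_two_right, Q]

lemma prod_right (n : ℕ) : ∏ k ∈ range n, (q ^ n + (-1) * q ^ (n + 1 + k))
    = q ^ (n * n) * Q q n := by
  have h : ∀ k ∈ range n, q ^ n + (-1) * q ^ (n + 1 + k) = q ^ n * (1 - q ^ (k + 1)) := by
    intro k hk
    ring
  rw [prod_congr rfl h, prod_mul_distrib, prod_const, card_range, Q, pow_mul]

open Polynomial in
lemma finite_jacobi (n : ℕ) :
    ∑ p ∈ HasAntidiagonal.antidiagonal (2 * n + 1),
      G q p.1 p.2 * (q ^ (p.1.choose 2 + n * p.2) * (-1) ^ p.1 * ((p.1 : R) - p.2)) =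
    -(2 * (-1) ^ n * q ^ (n + n.choose 2 + n * n) * Q q n ^ 2) := by
  have key := qbinom (Polynomial.C q) (2 * n + 1) (X : R[X]) (C (q ^ n))
  have hG : ∀ a b, G (Polynomial.C q) a b = Polynomial.C (G q a b) := by
    intro a
    induction a with
    | zero => intro b; simp [G_zero_left]
    | succ a iha =>
      intro b
      induction b with
      | zero => simp [G_zero_right]
      | succ b ihb => simp [G_succ, iha, ihb]
  simp only [hG] at key
  have e0 := congrArg (Polynomial.eval (-1)) key
  have e1 := congrArg (fun f => Polynomial.eval (-1) (X * derivative f)) key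
  have hs : ∏ k ∈ range (2 * n + 1), (C (q ^ n) + X * (C q : R[X]) ^ k) =
      (C (q ^ n) + X * (C q) ^ n) * ((∏ k ∈ range n, (C (q ^ n) + X * (C q : R[X]) ^ k)) *
        ∏ k ∈ range n, (C (q ^ n) + X * (C q : R[X]) ^ (n + 1 + k))) := by
    rw [show 2 * n + 1 = n + 1 + n by ring, prod_range_add, prod_range_succ]; ring
  rw [hs] at e0 e1
  have e0' : 0 = ∑ p ∈ HasAntidiagonal.antidiagonal (2 * n + 1),
      G q p.1 p.2 * (q ^ (p.1.choose 2 + n * p.2) * (-1) ^ p.1) := by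
    rw [eval_mul] at e0
    have : eval (-1) (C (q ^ n) + X * (C q) ^ n) = 0 := by
      simp
    rw [this, zero_mul, eval_finsetSum] at e0
    rw [e0]
    refine sum_congr rfl fun p _ => ?_
    simp [pow_add, pow_mul]
  have e1' : - (q ^ n * ((-1) ^ n * q ^ (n.choose 2) * Q q n * (q ^ (n * n) * Q q n)))
      = ∑ p ∈ HasAntidiagonal.antidiagonal (2 * n + 1),
      G q p.1 p.2 * (q ^ (p.1.choose 2 + n * p.2) * (-1) ^ p.1) * p.1 := by
    rw [← prod_left, ← prod_right]
    have hl : ∀ B : R[X], eval (-1) (X * derivative ((C (q ^ n) + X * (C q) ^ n) * B))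
        = - (q ^ n * eval (-1) B) := by
      intro B
      rw [← C_pow]
      simp [derivative_mul]
    simp only [hl] at e1
    rw [eval_mul, eval_prod, eval_prod] at e1
    simp only [eval_add, eval_mul, eval_C, eval_X, eval_pow] at e1
    rw [e1, derivative_sum, eval_finsetSum, mul_sum]
    refine sum_congr rfl fun p _ => ?_
    rw [← C_pow, ← C_pow, ← mul_assoc, ← C_mul, ← C_mul, derivative_C_mul_X_pow]
    rcases p with ⟨a, b⟩
    rcases a with _ | a
    · simp
    · simp only [eval_mul, eval_C, eval_X, eval_pow, add_tsub_cancel_right]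
      push_cast
      ring
  have : ∀ p ∈ HasAntidiagonal.antidiagonal (2 * n + 1),
      G q p.1 p.2 * (q ^ (p.1.choose 2 + n * p.2) * (-1) ^ p.1 * ((p.1 : R) - p.2))
      = 2 * (G q p.1 p.2 * (q ^ (p.1.choose 2 + n * p.2) * (-1) ^ p.1) * p.1)
        - (2 * n + 1) * (G q p.1 p.2 * (q ^ (p.1.choose 2 + n * p.2) * (-1) ^ p.1)) := by
    rintro ⟨a, b⟩ hp
    rw [Finset.HasAntidiagonal.mem_antidiagonal] at hp
    have : (a : R) + b = 2 * n + 1 := by exact_mod_cast congrArg (Nat.cast : ℕ → R) hp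
    have h2 : (b : R) = 2 * n + 1 - a := by rw [← this]; ring
    simp only [h2]
    ring
  rw [sum_congr rfl this, sum_sub_distrib, ← mul_sum, ← mul_sum, ← e0', ← e1']
  ring

end

lemma two_choose (a : ℕ) : (2 : ℤ) * (a.choose 2 : ℕ) = a * (a - 1) := by
  induction a with
  | zero => simp
  | succ a ih =>
    rw [Nat.choose_succ_succ']; push_cast; simp; linarith

lemma expo (n a b : ℕ) (h : a + b = 2 * n + 1) :
    ∃ e : ℕ, a.choose 2 + n * b = (n + n.choose 2 + n * n) + e ∧
      (8 * e + 1 : ℤ) = (a - b) ^ 2 := by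
  have h1 := two_choose a
  have h2 := two_choose n
  rcases le_or_gt a n with ha | ha
  · obtain ⟨i, rfl⟩ := Nat.exists_eq_add_of_le ha
    have hb : b = a + 2 * i + 1 := by omega
    subst hb
    have h3 := two_choose (i + 1)
    refine ⟨(i + 1).choose 2, ?_, ?_⟩
    · zify; push_cast at *; nlinarith
    · push_cast at *; linear_combination 4 * h3
  · obtain ⟨i, rfl⟩ := Nat.exists_eq_add_of_le ha.le
    obtain ⟨c, rfl⟩ : ∃ c, n = c := ⟨n, rfl⟩
    have h3 := two_choose i
    have hb : (b : ℤ) = n + 1 - i := by zify at h; linarith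
    refine ⟨i.choose 2, ?_, ?_⟩
    · zify; rw [hb]; push_cast at *; nlinarith
    · rw [hb]; push_cast at *; linear_combination 4 * h3

open PowerSeries

/-- coefficients field -/
abbrev K := ZMod 7

instance : Fact (Nat.Prime 7) := ⟨by norm_num⟩

/-- reduction of J mod 7 -/
def Jm (b : ℕ) : PowerSeries K := PowerSeries.map (Int.castRingHom K) (J b)

lemma Q_stable (M m : ℕ) (h : M ≤ m) :
    (X : PowerSeries K) ^ (M + 1) ∣ Q X m - Q X M := by
  induction m, h using Nat.le_induction with
  | base => simp
  | succ m hm ih =>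
    rw [Q_succ, show Q X m * (1 - (X : PowerSeries K) ^ (m + 1)) - Q X M
      = (Q X m - Q X M) - Q X m * X ^ (m + 1) by ring]
    exact dvd_sub ih (Dvd.dvd.mul_left (pow_dvd_pow _ (by omega)) _)

lemma coeff_Jm (m : ℕ) : coeff m (Jm 1) = coeff m (Q (X : PowerSeries K) (m + 1)) := by
  simp only [Jm, J, coeff_map, coeff_mk, one_mul]
  rw [← coeff_map, map_prod]
  simp [Q]

lemma Jm_stable (M m : ℕ) (h : M ≤ m) :
    (X : PowerSeries K) ^ (M + 1) ∣ Q X m - Jm 1 := by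
  rw [X_pow_dvd_iff]
  intro i hi
  rw [map_sub, coeff_Jm]
  have h1 := (X_pow_dvd_iff.1 (Q_stable i m (by omega))) i (by omega)
  have h2 := (X_pow_dvd_iff.1 (Q_stable i (i + 1) (by omega))) i (by omega)
  rw [map_sub, sub_eq_zero] at h1 h2
  rw [h1, h2, sub_self]

lemma const_Jm : constantCoeff (Jm 1) = 1 := by
  rw [← coeff_zero_eq_constantCoeff_apply, coeff_Jm]
  simp [Q]

lemma term_dvd (M n a b e : ℕ) (hn : n = 2 * M + 2) (h : a + b = 2 * n + 1)
    (he : (8 * e + 1 : ℤ) = (a - b) ^ 2) :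
    (X : PowerSeries K) ^ (M + 1) ∣ X ^ e * (G X a b * Jm 1 - 1) := by
  by_cases hM : M + 1 ≤ e
  · exact Dvd.dvd.mul_right (pow_dvd_pow _ hM) _
  have ha : M ≤ a := by
    by_contra hc
    zify at *
    nlinarith
  have hb : M ≤ b := by
    by_contra hc
    zify at *
    nlinarith
  apply Dvd.dvd.mul_left
  have hu : IsUnit (Jm 1) := by
    rw [PowerSeries.isUnit_iff_constantCoeff, const_Jm]; exact isUnit_one
  have h1 := Jm_stable M a ha
  have h2 := Jm_stable M b hb
  have h3 := Jm_stable M (a + b) (by omega)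
  have h4 : X ^ (M + 1) ∣ Jm 1 * (G X a b * Jm 1 - 1) := by
    have := G_mul (X : PowerSeries K) a b
    have e : Jm 1 * (G X a b * Jm 1 - 1) = (Q X (a + b) - Jm 1)
        - G X a b * Q X a * (Q X b - Jm 1) - G X a b * Jm 1 * (Q X a - Jm 1) := by
      rw [← this]; ring
    rw [e]
    exact dvd_sub (dvd_sub h3 (Dvd.dvd.mul_left h2 _)) (Dvd.dvd.mul_left h1 _)
  exact (hu.dvd_mul_left).1 h4

lemma coeff_cube (M : ℕ) (hM : coeff M (Jm 1 ^ 3) ≠ 0) :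
    ∃ z : K, z ≠ 0 ∧ (8 * M + 1 : K) = z ^ 2 := by
  obtain ⟨n, hn⟩ : ∃ n, n = 2 * M + 2 := ⟨_, rfl⟩
  have hex : ∀ p : ℕ × ℕ, ∃ e : ℕ, p.1 + p.2 = 2 * n + 1 →
      (p.1.choose 2 + n * p.2 = (n + n.choose 2 + n * n) + e ∧
      (8 * e + 1 : ℤ) = (p.1 - p.2) ^ 2) := by
    intro p
    by_cases h : p.1 + p.2 = 2 * n + 1
    · obtain ⟨e, he⟩ := expo n p.1 p.2 h
      exact ⟨e, fun _ => he⟩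
    · exact ⟨0, fun h' => absurd h' h⟩
  choose e he using hex
  have hj := finite_jacobi (X : PowerSeries K) n
  have hc : ∑ p ∈ HasAntidiagonal.antidiagonal (2 * n + 1),
      G (X : PowerSeries K) p.1 p.2 * ((X : PowerSeries K) ^ (e p) * (-1) ^ p.1 * ((p.1 : PowerSeries K) - (p.2 : PowerSeries K))) =
      -(2 * (-1) ^ n * Q (X : PowerSeries K) n ^ 2) := by
    apply mul_left_cancel₀ (pow_ne_zero (n + n.choose 2 + n * n)
      (X_ne_zero : (X : PowerSeries K) ≠ 0))
    rw [mul_sum]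
    trans -(2 * (-1) ^ n * X ^ (n + n.choose 2 + n * n) * Q (X : PowerSeries K) n ^ 2)
    · rw [← hj]
      refine sum_congr rfl fun p hp => ?_
      rw [(he p (Finset.HasAntidiagonal.mem_antidiagonal.1 hp)).1, pow_add _ _ (e p)]
      ring
    · ring
  have hd : (X : PowerSeries K) ^ (M + 1) ∣ (-(2 * (-1) ^ n * Jm 1 ^ 3)) -
      ∑ p ∈ HasAntidiagonal.antidiagonal (2 * n + 1),
        ((X : PowerSeries K) ^ (e p) * (-1) ^ p.1 * ((p.1 : PowerSeries K) - (p.2 : PowerSeries K))) := by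
    have e1 : (-(2 * (-1) ^ n * Jm 1 ^ 3)) - ∑ p ∈ HasAntidiagonal.antidiagonal (2 * n + 1),
        ((X : PowerSeries K) ^ (e p) * (-1) ^ p.1 * ((p.1 : PowerSeries K) - (p.2 : PowerSeries K))) =
        2 * (-1) ^ n * Jm 1 * (Q (X : PowerSeries K) n + Jm 1) * (Q (X : PowerSeries K) n - Jm 1) +
        ∑ p ∈ HasAntidiagonal.antidiagonal (2 * n + 1), (-1) ^ p.1 * ((p.1 : PowerSeries K) - (p.2 : PowerSeries K)) *
          ((X : PowerSeries K) ^ (e p) * (G (X : PowerSeries K) p.1 p.2 * Jm 1 - 1)) := by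
      have e2 : ∑ p ∈ HasAntidiagonal.antidiagonal (2 * n + 1), (-1) ^ p.1 * ((p.1 : PowerSeries K) - (p.2 : PowerSeries K)) *
          ((X : PowerSeries K) ^ (e p) * (G (X : PowerSeries K) p.1 p.2 * Jm 1 - 1)) =
          (∑ p ∈ HasAntidiagonal.antidiagonal (2 * n + 1), G (X : PowerSeries K) p.1 p.2 *
            ((X : PowerSeries K) ^ (e p) * (-1) ^ p.1 * ((p.1 : PowerSeries K) - (p.2 : PowerSeries K)))) * Jm 1 -
          ∑ p ∈ HasAntidiagonal.antidiagonal (2 * n + 1),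
            ((X : PowerSeries K) ^ (e p) * (-1) ^ p.1 * ((p.1 : PowerSeries K) - (p.2 : PowerSeries K))) := by
        rw [sum_mul, ← sum_sub_distrib]
        refine sum_congr rfl fun p _ => ?_
        ring
      rw [e2, hc]
      ring
    rw [e1]
    refine dvd_add (Dvd.dvd.mul_left (Jm_stable M n (by omega)) _) (dvd_sum fun p hp => ?_)
    have hp' := Finset.HasAntidiagonal.mem_antidiagonal.1 hp
    exact Dvd.dvd.mul_left (term_dvd M n p.1 p.2 (e p) hn hp' (he p hp').2) _
  have hcoef := (X_pow_dvd_iff.1 hd) M (by omega)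
  rw [map_sub, sub_eq_zero, map_sum] at hcoef
  have hl : coeff M (-(2 * (-1) ^ n * Jm 1 ^ 3)) ≠ 0 := by
    have : (-(2 * (-1) ^ n * Jm 1 ^ 3)) = C (-(2 * (-1) ^ n) : K) * Jm 1 ^ 3 := by
      rw [map_neg, map_mul, map_pow, map_neg, map_one, map_ofNat]; ring
    rw [this, coeff_C_mul]
    refine mul_ne_zero (neg_ne_zero.2 (mul_ne_zero (by decide) (pow_ne_zero _ (by decide)))) hM
  rw [hcoef] at hl
  obtain ⟨p, hp, hne⟩ := exists_ne_zero_of_sum_ne_zero hl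
  have hp' := Finset.HasAntidiagonal.mem_antidiagonal.1 hp
  have : (X : PowerSeries K) ^ (e p) * (-1) ^ p.1 * ((p.1 : PowerSeries K) - (p.2 : PowerSeries K))
      = C ((-1) ^ p.1 * ((p.1 : K) - p.2)) * X ^ (e p) := by
    simp; ring
  rw [this, coeff_C_mul, coeff_X_pow] at hne
  split_ifs at hne with hMe
  · refine ⟨(p.1 : K) - p.2, ?_, ?_⟩
    · intro h0
      simp [h0] at hne
    · have := congrArg (Int.cast : ℤ → K) (he p hp').2
      push_cast at this
      rw [hMe, this]
  · simp at hne

lemma coeff_six (m : ℕ) (hm : (m : K) = 5) : coeff m (Jm 1 ^ 6) = 0 := by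
  rw [show Jm 1 ^ 6 = Jm 1 ^ 3 * Jm 1 ^ 3 by ring, coeff_mul]
  refine sum_eq_zero fun p hp => ?_
  by_contra hne
  obtain ⟨z, hz, hz2⟩ := coeff_cube p.1 (left_ne_zero_of_mul hne)
  obtain ⟨w, hw, hw2⟩ := coeff_cube p.2 (right_ne_zero_of_mul hne)
  have hs : (p.1 : K) + p.2 = 5 := by
    rw [← hm]; exact_mod_cast congrArg (Nat.cast : ℕ → K) (Finset.HasAntidiagonal.mem_antidiagonal.1 hp)
  have h0 : z ^ 2 + w ^ 2 = 0 := by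
    rw [← hz2, ← hw2]
    have : (8 * p.1 + 1 + (8 * p.2 + 1) : K) = 8 * (p.1 + p.2) + 2 := by ring
    rw [this, hs]; decide
  clear hz2 hw2
  revert z w
  decide

lemma coeff_pow_seven (W : PowerSeries K) (m : ℕ) (hm : (m : K) ≠ 0) :
    coeff m (W ^ 7) = 0 := by
  rcases m with _ | m
  · simp at hm
  have h : derivative K (W ^ 7) = 0 := by
    rw [Derivation.leibniz_pow]
    have : (7 : PowerSeries K) = 0 := by
      have := congrArg (C : K →+* PowerSeries K) (show (7 : K) = 0 by decide)
      rwa [map_ofNat, map_zero] at this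
    simp [this]
  have h2 := congrArg (coeff m) h
  rw [coeff_derivative, map_zero] at h2
  rcases mul_eq_zero.1 h2 with h3 | h3
  · exact h3
  · exact absurd (by exact_mod_cast h3) hm

end Aux

/-- for all k ≥ 0 and n ≥ 0, `d_{7k}(7n + 5) ≡ 0 (mod 7)`, where for each `k`
`d_k` is defined by `∑ d_k(n) qⁿ = J_2^k / J_1^{3k+1}`. -/
theorem stmt2 (d : ℕ → ℕ → ℤ)
    (hd : ∀ k : ℕ, PowerSeries.mk (d k) * (J 1) ^ (3 * k + 1) = (J 2) ^ k)
    (k : ℕ) (n : ℕ) :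
    (7 : ℤ) ∣ d (7 * k) (7 * n + 5) := by
  have h := congrArg (PowerSeries.map (Int.castRingHom Aux.K)) (hd (7 * k))
  rw [map_mul, map_pow, map_pow] at h
  change _ * Aux.Jm 1 ^ _ = Aux.Jm 2 ^ _ at h
  set D := PowerSeries.map (Int.castRingHom Aux.K) (PowerSeries.mk (d (7 * k))) with hD
  have hu : Aux.Jm 1 * (Aux.Jm 1)⁻¹ = 1 :=
    PowerSeries.mul_inv_cancel _ (by rw [Aux.const_Jm]; exact one_ne_zero)
  have hu2 : (Aux.Jm 1) ^ (7 * (3 * k + 1)) * ((Aux.Jm 1)⁻¹) ^ (7 * (3 * k + 1)) = 1 := by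
    rw [← mul_pow, hu, one_pow]
  have hW : D = (Aux.Jm 2 ^ k * ((Aux.Jm 1)⁻¹) ^ (3 * k + 1)) ^ 7 * Aux.Jm 1 ^ 6 := by
    calc D = D * ((Aux.Jm 1) ^ (7 * (3 * k + 1)) * ((Aux.Jm 1)⁻¹) ^ (7 * (3 * k + 1))) := by
          rw [hu2, mul_one]
      _ = (D * (Aux.Jm 1) ^ (3 * (7 * k) + 1)) * Aux.Jm 1 ^ 6
            * ((Aux.Jm 1)⁻¹) ^ (7 * (3 * k + 1)) := by ring
      _ = _ := by rw [h]; ring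
  have hc : PowerSeries.coeff (7 * n + 5) D = 0 := by
    rw [hW, PowerSeries.coeff_mul]
    refine Finset.sum_eq_zero fun p hp => ?_
    by_cases h0 : (p.1 : Aux.K) = 0
    · have h7 : (7 : Aux.K) = 0 := by decide
      have := congrArg (Nat.cast : ℕ → Aux.K) (Finset.HasAntidiagonal.mem_antidiagonal.1 hp)
      push_cast at this
      rw [h0, h7, zero_add, zero_mul, zero_add] at this
      rw [Aux.coeff_six p.2 this, mul_zero]
    · rw [Aux.coeff_pow_seven _ _ h0, zero_mul]
  rw [hD, PowerSeries.coeff_map, PowerSeries.coeff_mk] at hc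
  exact (ZMod.intCast_zmod_eq_zero_iff_dvd _ 7).1 (by simpa using hc)
end
end

section
/- For all integers k ≥ 0 and all integers n ≥ 0, d_{7k+5}(7n + 2) ≡ 0 (mod 7). -/
noncomputable section
theorem jtp_shift {B : Type*} [AddCommMonoid B] (f : ℤ → B) (a b : ℤ) :
    ∑ k ∈ Finset.Icc a b, f (k + 1) = ∑ k ∈ Finset.Icc (a + 1) (b + 1), f k := by
  rw [← Finset.map_add_right_Icc, Finset.sum_map]
  rfl

theorem jtp_stepA {B : Type*} [CommRing B] (q a : B) (e t : ℤ → B)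
    (he : ∀ m : ℤ, 0 ≤ m → e (m - 1) = (1 - q ^ m.toNat) * e m)
    (hneg : e (-1) = 0) (n : ℕ)
    (ha : ∀ k : ℤ, k ≤ n → q ^ n * a * t k = -(q ^ (n - k).toNat * t (k + 1))) :
    (1 - a * q ^ n) * ∑ k ∈ Finset.Icc (-(n : ℤ)) n, t k * (e (n - k) * e (n + k)) =
    (1 - q ^ (2 * n + 1)) * ∑ k ∈ Finset.Icc (-(n : ℤ)) (n + 1), t k * (e (n + 1 - k) * e (n + k)) := by
  have h1 : ∑ k ∈ Finset.Icc (-(n : ℤ)) n, t k * (e (n - k) * e (n + k)) =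
      ∑ k ∈ Finset.Icc (-(n : ℤ)) (n + 1), t k * (e (n - k) * e (n + k)) := by
    apply Finset.sum_subset (Finset.Icc_subset_Icc le_rfl (by lia))
    intro k hk hk'
    simp only [Finset.mem_Icc] at hk hk'
    obtain rfl : k = n + 1 := by lia
    rw [show (n : ℤ) - (n + 1) = -1 by ring, hneg]; ring
  have h2 : a * q ^ n * ∑ k ∈ Finset.Icc (-(n : ℤ)) n, t k * (e (n - k) * e (n + k)) =
      - ∑ k ∈ Finset.Icc (-(n : ℤ)) (n + 1),
        q ^ (n + 1 - k).toNat * (t k * (e (n + 1 - k) * e (n + k - 1))) := by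
    have h3 : ∑ k ∈ Finset.Icc (-(n : ℤ)) (n + 1),
        q ^ (n + 1 - k).toNat * (t k * (e (n + 1 - k) * e (n + k - 1))) =
        ∑ k ∈ Finset.Icc (-(n : ℤ) + 1) (n + 1),
        q ^ (n + 1 - k).toNat * (t k * (e (n + 1 - k) * e (n + k - 1))) := by
      symm
      apply Finset.sum_subset (Finset.Icc_subset_Icc (by lia) (by lia))
      intro k hk hk'
      simp only [Finset.mem_Icc] at hk hk'
      obtain rfl : k = -n := by lia
      rw [show (n : ℤ) + (-n) - 1 = -1 by ring, hneg]; ring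
    rw [h3, ← jtp_shift, Finset.mul_sum, ← Finset.sum_neg_distrib]
    apply Finset.sum_congr rfl
    intro k hk
    simp only [Finset.mem_Icc] at hk
    rw [show (n : ℤ) + 1 - (k + 1) = n - k by ring, show (n : ℤ) + (k + 1) - 1 = n + k by ring]
    linear_combination (e (n - k) * e (n + k)) * ha k hk.2
  rw [sub_mul, h2, h1, one_mul, sub_neg_eq_add, ← Finset.sum_add_distrib, Finset.mul_sum]
  apply Finset.sum_congr rfl
  intro k hk
  simp only [Finset.mem_Icc] at hk
  have e1 := he (n + 1 - k) (by lia)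
  have e2 := he (n + k) (by lia)
  rw [show (n : ℤ) + 1 - k - 1 = n - k by ring] at e1
  rw [e1, e2]
  have : q ^ (2 * n + 1) = q ^ ((n : ℤ) + 1 - k).toNat * q ^ ((n : ℤ) + k).toNat := by
    rw [← pow_add]; congr 1; lia
  rw [this]; ring

theorem jtp_stepB {B : Type*} [CommRing B] (q b : B) (e t : ℤ → B)
    (he : ∀ m : ℤ, 0 ≤ m → e (m - 1) = (1 - q ^ m.toNat) * e m)
    (hneg : e (-1) = 0) (n : ℕ)
    (hb : ∀ k : ℤ, -n ≤ k → q ^ n * b * t k = -(q ^ (n + k).toNat * t (k - 1))) :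
    (1 - b * q ^ n) * ∑ k ∈ Finset.Icc (-(n : ℤ)) (n + 1), t k * (e (n + 1 - k) * e (n + k)) =
    (1 - q ^ (2 * n + 2)) * ∑ k ∈ Finset.Icc (-((n : ℤ) + 1)) (n + 1),
      t k * (e (n + 1 - k) * e (n + 1 + k)) := by
  have h1 : ∑ k ∈ Finset.Icc (-(n : ℤ)) (n + 1), t k * (e (n + 1 - k) * e (n + k)) =
      ∑ k ∈ Finset.Icc (-((n : ℤ) + 1)) (n + 1), t k * (e (n + 1 - k) * e (n + k)) := by
    apply Finset.sum_subset (Finset.Icc_subset_Icc (by lia) (by lia))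
    intro k hk hk'
    simp only [Finset.mem_Icc] at hk hk'
    obtain rfl : k = -(n + 1) := by lia
    rw [show (n : ℤ) + -(n + 1) = -1 by ring, hneg]; ring
  have h2 : b * q ^ n * ∑ k ∈ Finset.Icc (-(n : ℤ)) (n + 1), t k * (e (n + 1 - k) * e (n + k)) =
      - ∑ k ∈ Finset.Icc (-((n : ℤ) + 1)) (n + 1),
        q ^ (n + 1 + k).toNat * (t k * (e (n - k) * e (n + 1 + k))) := by
    have h3 : ∑ k ∈ Finset.Icc (-((n : ℤ) + 1)) (n + 1),
        q ^ (n + 1 + k).toNat * (t k * (e (n - k) * e (n + 1 + k))) =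
        ∑ k ∈ Finset.Icc (-((n : ℤ) + 1)) n,
        q ^ (n + 1 + k).toNat * (t k * (e (n - k) * e (n + 1 + k))) := by
      symm
      apply Finset.sum_subset (Finset.Icc_subset_Icc (by lia) (by lia))
      intro k hk hk'
      simp only [Finset.mem_Icc] at hk hk'
      obtain rfl : k = n + 1 := by lia
      rw [show (n : ℤ) - (n + 1) = -1 by ring, hneg]; ring
    rw [h3, show -(n : ℤ) = -((n : ℤ) + 1) + 1 by ring, ← jtp_shift, Finset.mul_sum,
      ← Finset.sum_neg_distrib]
    apply Finset.sum_congr rfl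
    intro k hk
    simp only [Finset.mem_Icc] at hk
    have := hb (k + 1) (by lia)
    rw [show (n : ℤ) + (k + 1) = n + 1 + k by ring, show k + 1 - 1 = k by ring] at this
    rw [show (n : ℤ) + 1 - (k + 1) = n - k by ring, show (n : ℤ) + (k + 1) = n + 1 + k by ring]
    linear_combination (e (n - k) * e (n + 1 + k)) * this
  rw [sub_mul, h2, h1, one_mul, sub_neg_eq_add, ← Finset.sum_add_distrib, Finset.mul_sum]
  apply Finset.sum_congr rfl
  intro k hk
  simp only [Finset.mem_Icc] at hk
  have e1 := he (n + 1 - k) (by lia)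
  have e2 := he (n + 1 + k) (by lia)
  rw [show (n : ℤ) + 1 - k - 1 = n - k by ring] at e1
  rw [show (n : ℤ) + 1 + k - 1 = n + k by ring] at e2
  rw [e1, e2]
  have : q ^ (2 * n + 2) = q ^ ((n : ℤ) + 1 - k).toNat * q ^ ((n : ℤ) + 1 + k).toNat := by
    rw [← pow_add]; congr 1; lia
  rw [this]; ring

theorem jtp_fin {B : Type*} [CommRing B] (q a b : B) (e t : ℤ → B)
    (he : ∀ m : ℤ, 0 ≤ m → e (m - 1) = (1 - q ^ m.toNat) * e m)
    (hneg : e (-1) = 0) (h0 : e 0 = 1) (t0 : t 0 = 1)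
    (ha : ∀ (n : ℕ) (k : ℤ), k ≤ n → q ^ n * a * t k = -(q ^ (n - k).toNat * t (k + 1)))
    (hb : ∀ (n : ℕ) (k : ℤ), -n ≤ k → q ^ n * b * t k = -(q ^ (n + k).toNat * t (k - 1)))
    (n : ℕ) :
    (∏ m ∈ Finset.range (2 * n), (1 - q ^ (m + 1))) *
      ∑ k ∈ Finset.Icc (-(n : ℤ)) n, t k * (e (n - k) * e (n + k)) =
    ∏ m ∈ Finset.range n, ((1 - a * q ^ m) * (1 - b * q ^ m)) := by
  induction n with
  | zero => simp [h0, t0]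
  | succ n ih =>
    rw [Finset.prod_range_succ, ← ih, show 2 * (n + 1) = 2 * n + 1 + 1 by ring,
      Finset.prod_range_succ, Finset.prod_range_succ]
    have A := jtp_stepA q a e t he hneg n (ha n)
    have B := jtp_stepB q b e t he hneg n (hb n)
    push_cast
    rw [show 2 * n + 1 + 1 = 2 * n + 2 by ring]
    set P := ∏ m ∈ Finset.range (2 * n), (1 - q ^ (m + 1))
    linear_combination (-P * (1 - b * q ^ n)) * A - P * (1 - q ^ (2 * n + 1)) * B
section Aux
open PowerSeries Filter Topology
open scoped PowerSeries.WithPiTopology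

/-- partial products -/
def PP (p n : ℕ) : PowerSeries ℤ :=
  ∏ k ∈ Finset.range n, (1 - (PowerSeries.X : PowerSeries ℤ) ^ (p * (k + 1)))

theorem PP_dvd (p : ℕ) (hp : 0 < p) (N n m : ℕ) (hn : N ≤ n) (hm : n ≤ m) :
    (X : PowerSeries ℤ) ^ (N + 1) ∣ PP p m - PP p n := by
  induction m, hm using Nat.le_induction with
  | base => simp
  | succ m hm ih =>
    have : PP p (m + 1) - PP p n = (PP p m - PP p n) - PP p m * X ^ (p * (m + 1)) := by
      rw [PP, Finset.prod_range_succ, ← PP]; ring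
    rw [this]
    refine dvd_sub ih (Dvd.dvd.mul_left (pow_dvd_pow _ ?_) _)
    nlinarith

theorem J_dvd (p : ℕ) (hp : 0 < p) (N n : ℕ) (hn : N ≤ n) :
    (X : PowerSeries ℤ) ^ N ∣ J p - PP p n := by
  rw [X_pow_dvd_iff]
  intro m hm
  have h := (X_pow_dvd_iff (φ := PP p n - PP p (m + 1)) (n := m + 2)).1
    (PP_dvd p hp (m + 1) (m + 1) n le_rfl (by lia)) m (by lia)
  rw [map_sub, sub_eq_zero] at h ⊢
  rw [h, J, coeff_mk, PP]

theorem tendsto_of_dvd (f : ℕ → PowerSeries ℤ) (g : PowerSeries ℤ)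
    (h : ∀ N : ℕ, ∃ n0, ∀ n, n0 ≤ n → (X : PowerSeries ℤ) ^ N ∣ f n - g) :
    Tendsto f atTop (𝓝 g) := by
  rw [WithPiTopology.tendsto_iff_coeff_tendsto]
  intro d
  apply tendsto_nhds_of_eventually_eq
  obtain ⟨n0, h0⟩ := h (d + 1)
  filter_upwards [eventually_ge_atTop n0] with n hn
  have := X_pow_dvd_iff.1 (h0 n hn) d (by lia)
  rwa [map_sub, sub_eq_zero] at this

theorem PP_tendsto (p : ℕ) (hp : 0 < p) : Tendsto (PP p) atTop (𝓝 (J p)) := by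
  apply tendsto_of_dvd
  intro N
  exact ⟨N, fun n hn => by rw [← neg_sub, dvd_neg]; exact J_dvd p hp N n hn⟩

theorem PP_const (p : ℕ) (hp : 0 < p) (n : ℕ) : constantCoeff (PP p n) = 1 := by
  rw [PP, map_prod]
  apply Finset.prod_eq_one
  intro k _
  have : p * (k + 1) ≠ 0 := by positivity
  simp [this]

theorem J_const (p : ℕ) (hp : 0 < p) : constantCoeff (J p) = 1 := by
  have h := (X_pow_dvd_iff.1 (J_dvd p hp 1 1 le_rfl)) 0 (by lia)
  rw [map_sub, sub_eq_zero] at h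
  simpa [PP_const p hp] using h

/-- inverse of J -/
def II (p : ℕ) : PowerSeries ℤ := invOfUnit (J p) 1

theorem J_mul_II (p : ℕ) (hp : 0 < p) : J p * II p = 1 :=
  mul_invOfUnit _ _ (by simp [J_const p hp])

/-- inverse partial products, extended by zero -/
def ee (p : ℕ) (m : ℤ) : PowerSeries ℤ := if m < 0 then 0 else invOfUnit (PP p m.toNat) 1

theorem PP_mul_ee (p : ℕ) (hp : 0 < p) (m : ℤ) (hm : 0 ≤ m) : PP p m.toNat * ee p m = 1 := by
  rw [ee, if_neg (by lia)]
  exact mul_invOfUnit _ _ (by simp [PP_const p hp])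

theorem ee_neg (p : ℕ) : ee p (-1) = 0 := by simp [ee]

theorem ee_zero (p : ℕ) (hp : 0 < p) : ee p 0 = 1 := by
  have := PP_mul_ee p hp 0 le_rfl
  simpa [PP] using this

theorem ee_rec (p : ℕ) (hp : 0 < p) (m : ℤ) (hm : 0 ≤ m) :
    ee p (m - 1) = (1 - (X ^ p) ^ m.toNat) * ee p m := by
  rcases hm.eq_or_lt with rfl | hm
  · simp [ee]
  · obtain ⟨k, rfl⟩ : ∃ k : ℕ, m = k + 1 := ⟨(m - 1).toNat, by lia⟩
    have h1 := PP_mul_ee p hp k (by lia)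
    have h2 := PP_mul_ee p hp (k + 1) (by lia)
    simp only [Int.toNat_natCast, show ((k : ℤ) + 1).toNat = k + 1 by lia] at h1 h2 ⊢
    rw [PP, Finset.prod_range_succ, ← PP] at h2
    rw [show (k : ℤ) + 1 - 1 = k by ring, ← pow_mul]
    linear_combination (1 - X ^ (p * (k + 1))) * ee p (k + 1) * h1 - ee p k * h2

theorem ee_dvd (p : ℕ) (hp : 0 < p) (N : ℕ) (m : ℤ) (hm : N ≤ m) :
    (X : PowerSeries ℤ) ^ N ∣ ee p m - II p := by
  have h1 := PP_mul_ee p hp m (by lia)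
  have h2 := J_mul_II p hp
  have : ee p m - II p = (J p - PP p m.toNat) * (ee p m * II p) := by
    linear_combination II p * h1 - ee p m * h2
  rw [this]
  exact Dvd.dvd.mul_right (J_dvd p hp N _ (by lia)) _

theorem jtp_lim (p : ℕ) (hp : 0 < p) (c : ℤ → ℤ) (E : ℤ → ℕ) (hE : ∀ k, k.natAbs ≤ E k + 1)
    (S : PowerSeries ℤ) (hS : HasSum (fun k => monomial (E k) (c k)) S) :
    Tendsto (fun n : ℕ => ∑ k ∈ Finset.Icc (-(n : ℤ)) n,
      monomial (E k) (c k) * (ee p (n - k) * ee p (n + k))) atTop (𝓝 (S * (II p * II p))) := by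
  have hT : Tendsto (fun n : ℕ => Finset.Icc (-(n : ℤ)) n) atTop atTop := by
    apply tendsto_atTop_finset_of_monotone
    · intro a b hab
      exact Finset.Icc_subset_Icc (by lia) (by lia)
    · intro x
      exact ⟨x.natAbs, by simp only [Finset.mem_Icc]; lia⟩
  have h1 := (hS.comp hT).mul_const (II p * II p)
  have h2 : Tendsto (fun n : ℕ => ∑ k ∈ Finset.Icc (-(n : ℤ)) n,
      monomial (E k) (c k) * (ee p (n - k) * ee p (n + k)) -
      (∑ k ∈ Finset.Icc (-(n : ℤ)) n, monomial (E k) (c k)) * (II p * II p)) atTop (𝓝 0) := by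
    apply tendsto_of_dvd
    intro N
    refine ⟨2 * N + 2, fun n hn => ?_⟩
    rw [sub_zero, Finset.sum_mul, ← Finset.sum_sub_distrib]
    apply Finset.dvd_sum
    intro k hk
    rw [← mul_sub]
    by_cases h : N ≤ E k
    · apply Dvd.dvd.mul_right
      rw [X_pow_dvd_iff]
      intro m hm
      rw [coeff_monomial, if_neg (by lia)]
    · apply Dvd.dvd.mul_left
      have := hE k
      have e1 := ee_dvd p hp N (n - k) (by lia)
      have e2 := ee_dvd p hp N (n + k) (by lia)
      have : ee p (n - k) * ee p (n + k) - II p * II p =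
        (ee p (n - k) - II p) * ee p (n + k) + II p * (ee p (n + k) - II p) := by ring
      rw [this]
      exact dvd_add (e1.mul_right _) (e2.mul_left _)
  have h3 := h2.add h1
  rw [zero_add] at h3
  refine h3.congr fun n => ?_
  simp

theorem theta_summable {ι : Type*} (c : ι → ℤ) (E : ι → ℕ) (hE : ∀ d, {i | E i = d}.Finite) :
    Summable (fun k => monomial (R := ℤ) (E k) (c k)) := by
  rw [WithPiTopology.summable_iff_summable_coeff]
  intro d
  apply summable_of_finite_support
  refine (hE d).subset ?_
  intro i hi
  simp only [Function.mem_support, coeff_monomial] at hi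
  by_contra h
  exact hi (if_neg (fun h' => h h'.symm))

theorem fin_of_growth (E : ℤ → ℕ) (hE : ∀ k, k.natAbs ≤ E k + 1) (d : ℕ) :
    {i | E i ≤ d}.Finite := by
  apply (Set.finite_Icc (-(d + 1 : ℤ)) (d + 1)).subset
  intro i hi
  have := hE i
  simp only [Set.mem_setOf_eq] at hi
  simp only [Set.mem_Icc]; lia

theorem theta_mul {ι κ : Type*} (c : ι → ℤ) (E : ι → ℕ) (hE : ∀ d, {i | E i ≤ d}.Finite)
    (c' : κ → ℤ) (E' : κ → ℕ) (hE' : ∀ d, {i | E' i ≤ d}.Finite) (S T : PowerSeries ℤ)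
    (hS : HasSum (fun k => monomial (E k) (c k)) S)
    (hT : HasSum (fun k => monomial (E' k) (c' k)) T) :
    HasSum (fun x : ι × κ => monomial (E x.1 + E' x.2) (c x.1 * c' x.2)) (S * T) := by
  have h := theta_summable (fun x : ι × κ => c x.1 * c' x.2) (fun x => E x.1 + E' x.2) (by
    intro d
    refine ((hE d).prod (hE' d)).subset ?_
    rintro ⟨x, y⟩ h
    simp only [Set.mem_setOf_eq, Set.mem_prod] at h ⊢
    lia)
  have := hS.mul hT (by simpa only [monomial_mul_monomial] using h)
  simpa only [monomial_mul_monomial] using this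
end Aux
section Inst
open PowerSeries Filter Topology
open scoped PowerSeries.WithPiTopology

/-- sign -/
def sgn (k : ℤ) : ℤ := ((k.negOnePow : ℤˣ) : ℤ)

theorem sgn_succ (k : ℤ) : sgn (k + 1) = - sgn k := by simp [sgn, Int.negOnePow_succ]
theorem sgn_pred (k : ℤ) : sgn (k - 1) = - sgn k := by
  have := sgn_succ (k - 1)
  rw [sub_add_cancel] at this
  rw [this, neg_neg]
theorem sgn_zero : sgn 0 = 1 := by simp [sgn]

theorem PP_eq (p n : ℕ) : PP p n = ∏ m ∈ Finset.range n, (1 - (X ^ p : PowerSeries ℤ) ^ (m + 1)) := by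
  simp only [PP, pow_mul]

theorem jtp_X (p α β : ℕ) (hp : 0 < p) (hab : α + β = p) (E : ℤ → ℕ)
    (hE : ∀ k, k.natAbs ≤ E k + 1) (E0 : E 0 = 0)
    (hrec : ∀ k, (E (k + 1) : ℤ) = E k + α + p * k) :
    ∃ S : PowerSeries ℤ, HasSum (fun k => monomial (E k) (sgn k)) S ∧
    Tendsto (fun n => ∏ m ∈ Finset.range n,
      ((1 - X ^ α * (X ^ p : PowerSeries ℤ) ^ m) * (1 - X ^ β * (X ^ p) ^ m))) atTop
      (𝓝 (II p * S)) := by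
  obtain ⟨S, hS⟩ := theta_summable sgn E
    (fun d => (fin_of_growth E hE d).subset (fun i hi => le_of_eq hi))
  refine ⟨S, hS, ?_⟩
  have h1 := jtp_lim p hp sgn E hE S hS
  have h2 : Tendsto (fun n => PP p (2 * n)) atTop (𝓝 (J p)) :=
    (PP_tendsto p hp).comp (tendsto_id.const_mul_atTop' (by norm_num : 0 < 2))
  have h3 := h2.mul h1
  have : J p * (S * (II p * II p)) = II p * S := by
    linear_combination S * II p * J_mul_II p hp
  rw [this] at h3
  refine h3.congr fun n => ?_
  have key := jtp_fin (X ^ p : PowerSeries ℤ) (X ^ α) (X ^ β) (ee p)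
    (fun k => monomial (E k) (sgn k)) (ee_rec p hp) (ee_neg p) (ee_zero p hp)
    (by simp [E0, sgn_zero]) ?_ ?_ n
  · rw [← PP_eq] at key
    exact key
  · intro n k hk
    have hx : p * n + α + E k = p * ((n : ℤ) - k).toNat + E (k + 1) := by
      have := hrec k
      zify
      rw [Int.toNat_of_nonneg (by lia), this]; ring
    have hx' := congrArg (fun i => (X : PowerSeries ℤ) ^ i) hx
    simp only [pow_add] at hx'
    simp only [monomial_eq_C_mul_X_pow, sgn_succ, map_neg, ← pow_mul]
    linear_combination C (sgn k) * hx'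
  · intro n k hk
    have hx : p * n + β + E k = p * ((n : ℤ) + k).toNat + E (k - 1) := by
      have := hrec (k - 1)
      rw [sub_add_cancel] at this
      zify at hab ⊢
      rw [Int.toNat_of_nonneg (by lia), this, ← hab]; ring
    have hx' := congrArg (fun i => (X : PowerSeries ℤ) ^ i) hx
    simp only [pow_add] at hx'
    simp only [monomial_eq_C_mul_X_pow, sgn_pred, map_neg, ← pow_mul]
    linear_combination C (sgn k) * hx'

theorem gauss : ∃ S : PowerSeries ℤ, HasSum (fun k : ℤ => monomial (k ^ 2).toNat (sgn k)) S ∧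
    J 1 ^ 2 = J 2 * S := by
  obtain ⟨S, hS, h⟩ := jtp_X 2 1 1 (by norm_num) rfl (fun k => (k ^ 2).toNat)
    (by intro k; zify; rw [Int.toNat_of_nonneg (by positivity), Int.abs_eq_natAbs]
        have : (k.natAbs : ℤ) ^ 2 = k ^ 2 := Int.natAbs_sq k
        nlinarith) (by simp)
    (by intro k; rw [Int.toNat_of_nonneg (by positivity), Int.toNat_of_nonneg (by positivity)]
        push_cast; ring)
  refine ⟨S, hS, ?_⟩
  have h2 := PP_tendsto 2 (by norm_num)
  have h1 : Tendsto (fun n => PP 1 (2 * n)) atTop (𝓝 (J 1)) :=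
    (PP_tendsto 1 (by norm_num)).comp (tendsto_id.const_mul_atTop' (by norm_num : 0 < 2))
  have := tendsto_nhds_unique (h1.pow 2) (((h2.pow 2).mul h).congr fun n => ?_)
  · rw [this]
    linear_combination J 2 * S * J_mul_II 2 (by norm_num)
  · have : PP 1 (2 * n) = PP 2 n * ∏ m ∈ Finset.range n, (1 - X * (X ^ 2) ^ m) := by
      induction n with
      | zero => simp [PP]
      | succ n ih =>
        rw [Finset.prod_range_succ, PP, show 2 * (n + 1) = 2 * n + 1 + 1 by ring,
          Finset.prod_range_succ, Finset.prod_range_succ, ← PP, ih, PP, PP, Finset.prod_range_succ]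
        ring
    rw [this, mul_pow, ← Finset.prod_pow]
    congr 1
    apply Finset.prod_congr rfl
    intros; ring

theorem pent : HasSum (fun k : ℤ => monomial (3 * k ^ 2 - k).toNat (sgn k)) (J 2) := by
  have pos : ∀ k : ℤ, 0 ≤ 3 * k ^ 2 - k := by
    intro k
    have : k ≤ k ^ 2 := Int.le_self_sq k
    nlinarith
  obtain ⟨S, hS, h⟩ := jtp_X 6 2 4 (by norm_num) rfl (fun k => (3 * k ^ 2 - k).toNat)
    (by intro k; zify; rw [Int.toNat_of_nonneg (pos _)]
        rcases abs_cases k with h | h <;> nlinarith) (by simp)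
    (by intro k; rw [Int.toNat_of_nonneg (pos _), Int.toNat_of_nonneg (pos _)]
        push_cast; ring)
  suffices J 2 = S by rw [this]; exact hS
  have h2 := PP_tendsto 6 (by norm_num)
  have h1 : Tendsto (fun n => PP 2 (3 * n)) atTop (𝓝 (J 2)) :=
    (PP_tendsto 2 (by norm_num)).comp (tendsto_id.const_mul_atTop' (by norm_num : 0 < 3))
  have := tendsto_nhds_unique h1 ((h2.mul h).congr fun n => ?_)
  · rw [this]
    linear_combination S * J_mul_II 6 (by norm_num)
  · symm
    induction n with
    | zero => simp [PP]
    | succ n ih =>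
      rw [Finset.prod_range_succ, PP, show 3 * (n + 1) = 3 * n + 1 + 1 + 1 by ring,
        Finset.prod_range_succ, Finset.prod_range_succ, Finset.prod_range_succ, ← PP, ih, PP, PP,
        Finset.prod_range_succ]
      ring

theorem two_tri (k : ℤ) : 2 * (((k * (k - 1) / 2).toNat : ℕ) : ℤ) = k * (k - 1) := by
  have h : 0 ≤ k * (k - 1) := by
    have : k ≤ k ^ 2 := Int.le_self_sq k
    nlinarith
  rw [Int.toNat_of_nonneg (by positivity)]
  exact Int.two_mul_ediv_two_of_even (Int.even_mul_pred_self k)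

theorem cube : HasSum (fun k : ℤ => monomial (k * (k - 1) / 2).toNat (sgn k * k)) (-J 1 ^ 3) := by
  set E : ℤ → ℕ := fun k => (k * (k - 1) / 2).toNat with hEdef
  have E2 : ∀ k, 2 * (E k : ℤ) = k * (k - 1) := two_tri
  have hE : ∀ k, k.natAbs ≤ E k + 1 := by
    intro k
    have := E2 k
    zify
    rcases abs_cases k with h | h
    · by_contra h'
      have : k ≤ 0 ∨ k = 1 ∨ 2 ≤ k := by lia
      rcases this with h | h | h <;> nlinarith
    · nlinarith
  obtain ⟨S, hS⟩ := theta_summable (fun k => sgn k * k) E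
    (fun d => (fin_of_growth E hE d).subset (fun i hi => le_of_eq hi))
  have hE0 : E 0 = 0 := by simp [hEdef]
  clear_value E
  suffices -J 1 ^ 3 = S by rw [this]; rw [hEdef] at hS; exact hS
  have h1 := jtp_lim 1 (by norm_num) _ E hE S hS
  have h2 : Tendsto (fun n => PP 1 (2 * n)) atTop (𝓝 (J 1)) :=
    (PP_tendsto 1 (by norm_num)).comp (tendsto_id.const_mul_atTop' (by norm_num : 0 < 2))
  have h3 := (h2.mul h1).comp (tendsto_add_atTop_nat 1)
  have h4 := PP_tendsto 1 (by norm_num)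
  have h5 := (h4.mul (h4.comp (tendsto_add_atTop_nat 1))).neg
  have := tendsto_nhds_unique h5 (h3.congr fun n => ?_)
  · have hI := J_mul_II 1 (by norm_num)
    linear_combination J 1 * this + S * (J 1 * II 1 + 1) * hI
  · have key := jtp_fin (B := DualNumber (PowerSeries ℤ)) (TrivSqZeroExt.inl X)
      (TrivSqZeroExt.inl 1 + TrivSqZeroExt.inr 1) (TrivSqZeroExt.inl X - TrivSqZeroExt.inr X)
      (fun m => TrivSqZeroExt.inl (ee 1 m))
      (fun k => TrivSqZeroExt.inl (monomial (E k) (sgn k)) +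
        TrivSqZeroExt.inr (monomial (E k) (sgn k * k))) ?_ ?_ ?_ ?_ ?_ ?_ (n + 1)
    · have hP : ∏ m ∈ Finset.range (2 * (n + 1)),
          (1 - (TrivSqZeroExt.inl X : DualNumber (PowerSeries ℤ)) ^ (m + 1)) =
          TrivSqZeroExt.inlHom _ _ (PP 1 (2 * (n + 1))) := by
        simp only [PP, map_prod, map_sub, map_one, map_pow, one_mul, TrivSqZeroExt.inlHom_apply]
      rw [hP, Finset.prod_range_succ'] at key
      set r := ∏ k ∈ Finset.range n, ((1 - (TrivSqZeroExt.inl 1 + TrivSqZeroExt.inr 1) *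
        (TrivSqZeroExt.inl X : DualNumber (PowerSeries ℤ)) ^ (k + 1)) *
        (1 - (TrivSqZeroExt.inl X - TrivSqZeroExt.inr X) * TrivSqZeroExt.inl X ^ (k + 1))) with hr
      have hrf : r.fst = ∏ k ∈ Finset.range n, ((1 - X ^ (k + 1)) * (1 - X ^ (k + 1 + 1))) := by
        have : r.fst = TrivSqZeroExt.fstHom (PowerSeries ℤ) (PowerSeries ℤ) (PowerSeries ℤ) r := rfl
        rw [this, hr, map_prod]
        apply Finset.prod_congr rfl
        intro k _
        simp [pow_succ]
        left; ring
      have k2 := congrArg TrivSqZeroExt.snd key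
      simp only [TrivSqZeroExt.inlHom_apply, TrivSqZeroExt.snd_mul, TrivSqZeroExt.snd_sum,
        TrivSqZeroExt.fst_mul, TrivSqZeroExt.fst_neg, TrivSqZeroExt.fst_add,
        TrivSqZeroExt.fst_inl, TrivSqZeroExt.fst_inr, 
        TrivSqZeroExt.fst_sub, TrivSqZeroExt.snd_sub, TrivSqZeroExt.fst_one, TrivSqZeroExt.snd_one,
        TrivSqZeroExt.snd_neg, TrivSqZeroExt.snd_add, smul_eq_mul, MulOpposite.smul_eq_mul_unop,
        MulOpposite.unop_op, pow_zero, smul_zero, mul_zero, zero_mul, add_zero, zero_add, mul_one,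
        TrivSqZeroExt.snd_inl, TrivSqZeroExt.snd_inr, hrf, sub_self, zero_sub, one_mul] at k2
      simp only [Function.comp_apply]
      have hp : PP 1 n * PP 1 (n + 1) =
          (∏ k ∈ Finset.range n, ((1 - X ^ (k + 1)) * (1 - X ^ (k + 1 + 1)))) * (1 - X) := by
        rw [Finset.prod_mul_distrib, PP, PP, Finset.prod_range_succ']
        simp only [one_mul]
        ring
      rw [hp]
      push_cast at k2 ⊢
      linear_combination k2
    · intro m hm
      have := ee_rec 1 (by norm_num) m hm
      rw [this]
      ext <;> simp
    · simp [ee_neg]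
    · simp [ee_zero 1]
    · ext <;> simp [hE0, sgn_zero]
    · intro n k hk
      have : n + E k = ((n : ℤ) - k).toNat + E (k + 1) := by
        have := E2 k
        have := E2 (k + 1)
        zify
        rw [Int.toNat_of_nonneg (by lia)]
        nlinarith
      have hx' := congrArg (fun i => (X : PowerSeries ℤ) ^ i) this
      simp only [pow_add] at hx'
      rw [TrivSqZeroExt.inl_pow, TrivSqZeroExt.inl_pow]
      ext1
      · simp only [TrivSqZeroExt.fst_mul, TrivSqZeroExt.fst_neg, TrivSqZeroExt.fst_add,
          TrivSqZeroExt.fst_inl, TrivSqZeroExt.fst_inr, monomial_eq_C_mul_X_pow, sgn_succ, map_neg]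
        linear_combination C (sgn k) * hx'
      · simp only [TrivSqZeroExt.fst_mul, TrivSqZeroExt.fst_neg, TrivSqZeroExt.fst_add,
          TrivSqZeroExt.fst_inl, TrivSqZeroExt.fst_inr, TrivSqZeroExt.snd_mul,
          TrivSqZeroExt.snd_neg, TrivSqZeroExt.snd_add, smul_eq_mul, MulOpposite.smul_eq_mul_unop,
          MulOpposite.unop_op,
          TrivSqZeroExt.snd_inl, TrivSqZeroExt.snd_inr, monomial_eq_C_mul_X_pow, sgn_succ, map_neg,
          map_mul, map_add, map_one]
        linear_combination C (sgn k) * (C k + 1) * hx'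
    · intro n k hk
      have : n + 1 + E k = ((n : ℤ) + k).toNat + E (k - 1) := by
        have := E2 k
        have := E2 (k - 1)
        zify
        rw [Int.toNat_of_nonneg (by lia)]
        nlinarith
      have hx' := congrArg (fun i => (X : PowerSeries ℤ) ^ i) this
      simp only [pow_add] at hx'
      rw [TrivSqZeroExt.inl_pow, TrivSqZeroExt.inl_pow]
      ext1
      · simp only [TrivSqZeroExt.fst_mul, TrivSqZeroExt.fst_neg, TrivSqZeroExt.fst_sub,
          TrivSqZeroExt.fst_add,
          TrivSqZeroExt.fst_inl, TrivSqZeroExt.fst_inr, monomial_eq_C_mul_X_pow, sgn_pred, map_neg]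
        linear_combination C (sgn k) * hx'
      · simp only [TrivSqZeroExt.fst_mul, TrivSqZeroExt.fst_neg, TrivSqZeroExt.fst_add,
          TrivSqZeroExt.fst_inl, TrivSqZeroExt.fst_inr, TrivSqZeroExt.snd_mul,
          TrivSqZeroExt.fst_sub, TrivSqZeroExt.snd_sub,
          TrivSqZeroExt.snd_neg, TrivSqZeroExt.snd_add, smul_eq_mul, MulOpposite.smul_eq_mul_unop,
          MulOpposite.unop_op,
          TrivSqZeroExt.snd_inl, TrivSqZeroExt.snd_inr, monomial_eq_C_mul_X_pow, sgn_pred, map_neg,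
          map_mul, map_sub, map_one]
        linear_combination C (sgn k) * (C k - 1) * hx'
end Inst
section Quint
open PowerSeries Filter Topology
open scoped PowerSeries.WithPiTopology

theorem sgn_add (a b : ℤ) : sgn (a + b) = sgn a * sgn b := by simp [sgn, Int.negOnePow_add]
theorem sgn_neg (a : ℤ) : sgn (-a) = sgn a := by simp [sgn]
theorem sgn_sq (a : ℤ) : sgn a * sgn a = 1 := by
  rw [← sgn_add, sgn, Int.negOnePow_even _ ⟨a, rfl⟩]; rfl
theorem sgn_two_mul (a : ℤ) : sgn (2 * a) = 1 := by
  rw [two_mul, sgn_add, sgn_sq]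
theorem sgn_one : sgn 1 = -1 := by simp [sgn]

theorem eq_zero_of_neg (S : PowerSeries ℤ) (h : S = -S) : S = 0 := by
  ext n
  have := congrArg (coeff n) h
  rw [map_neg] at this
  rw [map_zero]; lia

/-- index map -/
def Phi : (ℤ × ℤ) ⊕ ((ℤ × ℤ) ⊕ (ℤ × ℤ)) → ℤ × ℤ
  | .inl (k, j) => (2 * j - k, j + k)
  | .inr (.inl (k, j)) => (2 * j - k - 1, j + k)
  | .inr (.inr (k, j)) => (-2 * j + 1 + k, -j - k)

theorem Phi_bij : Function.Bijective Phi := by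
  constructor
  · rintro (⟨k, j⟩ | ⟨k, j⟩ | ⟨k, j⟩) (⟨k', j'⟩ | ⟨k', j'⟩ | ⟨k', j'⟩) h <;>
    simp only [Phi, Prod.mk.injEq, Sum.inl.injEq, Sum.inr.injEq, reduceCtorEq] at h ⊢ <;> lia
  · rintro ⟨i, j⟩
    have h : (2 * j - i) % 3 = 0 ∨ (2 * j - i) % 3 = 1 ∨ (2 * j - i) % 3 = 2 := by lia
    rcases h with h | h | h
    · refine ⟨.inl ((2 * j - i) / 3, j - (2 * j - i) / 3), ?_⟩
      simp only [Phi, Prod.mk.injEq]; lia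
    · refine ⟨.inr (.inl ((2 * j - i) / 3, j - (2 * j - i) / 3)), ?_⟩
      simp only [Phi, Prod.mk.injEq]; lia
    · refine ⟨.inr (.inr (-((2 * j - i) / 3) - 1, -j + (2 * j - i) / 3 + 1)), ?_⟩
      simp only [Phi, Prod.mk.injEq]; lia

theorem pent_growth (k : ℤ) : k.natAbs ≤ pentagonal (-k) + 1 := by
  have := two_mul_natCast_pentagonal_neg k
  zify
  rcases abs_cases k with h | h <;> nlinarith

theorem tri_growth (k : ℤ) : k.natAbs ≤ (k * (k - 1) / 2).toNat + 1 := by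
  have := two_tri k
  zify
  rcases abs_cases k with h | h
  · by_contra h'
    have : k ≤ 0 ∨ k = 1 ∨ 2 ≤ k := by lia
    rcases this with h | h | h <;> nlinarith
  · nlinarith

theorem sq_growth (k : ℤ) : k.natAbs ≤ (k ^ 2).toNat + 1 := by
  zify; rw [Int.toNat_of_nonneg (by positivity), Int.abs_eq_natAbs]
  have : (k.natAbs : ℤ) ^ 2 = k ^ 2 := Int.natAbs_sq k
  nlinarith

theorem p2_nonneg (k : ℤ) : 0 ≤ 3 * k ^ 2 - k := by
  have : k ≤ k ^ 2 := Int.le_self_sq k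
  nlinarith

theorem p2_growth (k : ℤ) : k.natAbs ≤ (3 * k ^ 2 - k).toNat + 1 := by
  zify; rw [Int.toNat_of_nonneg (p2_nonneg _)]
  rcases abs_cases k with h | h <;> nlinarith

theorem summ_of_growth (c : ℤ → ℤ) (E : ℤ → ℕ) (hE : ∀ k, k.natAbs ≤ E k + 1) :
    Summable (fun k => monomial (R := ℤ) (E k) (c k)) :=
  theta_summable c E (fun d => (fin_of_growth E hE d).subset (fun i hi => le_of_eq hi))

theorem hs_congr {ι : Type*} {f g : ι → PowerSeries ℤ} {S : PowerSeries ℤ} (hg : HasSum g S)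
    (h : ∀ x, f x = g x) : HasSum f S := by
  rwa [funext h]

theorem dbl (φ : PowerSeries ℤ) (hφ : HasSum (fun k : ℤ => monomial (k ^ 2).toNat (sgn k)) φ) :
    HasSum (fun x : ℤ × ℤ => monomial (R := ℤ) ((x.1 * (x.1 - 1) / 2).toNat + (x.2 ^ 2).toNat)
      (sgn x.1 * sgn x.2 * (x.1 - 2 * x.2))) (-J 1 ^ 3 * φ) := by
  have h1 := theta_mul _ _ (fin_of_growth _ tri_growth) _ _ (fin_of_growth _ sq_growth) _ _ cube hφ
  obtain ⟨A, hA⟩ := summ_of_growth sgn _ tri_growth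
  obtain ⟨B, hB⟩ := summ_of_growth (fun k => sgn k * (2 * k)) _ sq_growth
  have hB0 : B = 0 := by
    apply eq_zero_of_neg
    refine hB.unique ?_
    rw [← (Equiv.neg ℤ).hasSum_iff]
    refine hs_congr hB.neg fun k => ?_
    simp [sgn_neg]
  have h2 := theta_mul _ _ (fin_of_growth _ tri_growth) _ _ (fin_of_growth _ sq_growth) _ _ hA hB
  have h3 := h1.sub h2
  rw [hB0, mul_zero, sub_zero] at h3
  refine hs_congr h3 fun x => ?_
  rw [← map_sub]
  congr 1
  ring

theorem quint : ∃ F : PowerSeries ℤ,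
    HasSum (fun k : ℤ => monomial (pentagonal (-k)) (6 * k + 1)) F ∧ J 1 ^ 5 = J 2 ^ 2 * F := by
  obtain ⟨φ, hφ, hJφ⟩ := gauss
  have hD := dbl φ hφ
  obtain ⟨A, hA⟩ := summ_of_growth (fun k => -(3 * k)) _ pent_growth
  obtain ⟨B, hB⟩ := summ_of_growth (fun k => -(3 * k + 1)) _ pent_growth
  refine ⟨-(A + B), ?_, ?_⟩
  · refine hs_congr (hA.add hB).neg fun k => ?_
    rw [← map_add, ← map_neg]
    congr 1
    ring
  have hA2 := theta_mul _ _ (fin_of_growth _ pent_growth) _ _ (fin_of_growth _ p2_growth) _ _ hA pent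
  have hB2 := theta_mul _ _ (fin_of_growth _ pent_growth) _ _ (fin_of_growth _ p2_growth) _ _ hB pent
  have hD' := (Equiv.ofBijective Phi Phi_bij).hasSum_iff.2 hD
  set f : ℤ × ℤ → PowerSeries ℤ := fun x => monomial (R := ℤ)
    ((x.1 * (x.1 - 1) / 2).toNat + (x.2 ^ 2).toNat) (sgn x.1 * sgn x.2 * (x.1 - 2 * x.2)) with hf
  have sq (j : ℤ) : ((j ^ 2).toNat : ℤ) = j ^ 2 := Int.toNat_of_nonneg (by positivity)
  have f0 : ∀ k j : ℤ, f (Phi (.inl (k, j))) =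
      monomial (pentagonal (-k) + (3 * j ^ 2 - j).toNat) (-(3 * k) * sgn j) := by
    intro k j
    simp only [hf, Phi]
    congr 1
    · congr 1
      have h1 := two_tri (2 * j - k)
      have h2 := two_mul_natCast_pentagonal_neg k
      have h3 := Int.toNat_of_nonneg (p2_nonneg j)
      have h4 := sq (j + k)
      generalize ((2 * j - k) * (2 * j - k - 1) / 2).toNat = u at *
      generalize ((j + k) ^ 2).toNat = v at *
      generalize (3 * j ^ 2 - j).toNat = w at *
      zify
      linarith
    · rw [show 2 * j - k = 2 * j + -k by ring, sgn_add, sgn_add, sgn_two_mul, sgn_neg]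
      linear_combination (-(3 * k) * sgn j) * sgn_sq k
  have f2 : ∀ k j : ℤ, f (Phi (.inr (.inr (k, j)))) =
      monomial (pentagonal (-k) + (3 * j ^ 2 - j).toNat) (-(3 * k + 1) * sgn j) := by
    intro k j
    simp only [hf, Phi]
    congr 1
    · congr 1
      have h1 := two_tri (-2 * j + 1 + k)
      have h2 := two_mul_natCast_pentagonal_neg k
      have h3 := Int.toNat_of_nonneg (p2_nonneg j)
      have h4 := sq (-j - k)
      generalize ((-2 * j + 1 + k) * (-2 * j + 1 + k - 1) / 2).toNat = u at *
      generalize ((-j - k) ^ 2).toNat = v at *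
      generalize (3 * j ^ 2 - j).toNat = w at *
      zify
      linarith
    · rw [show -2 * j + 1 + k = 2 * (-j) + 1 + k by ring, show -j - k = -(j + k) by ring, sgn_neg,
        sgn_add, sgn_add, sgn_add, sgn_two_mul, sgn_one]
      linear_combination (-(3 * k + 1) * sgn j) * sgn_sq k
  have f1 : ∀ k j : ℤ, f (Phi (.inr (.inl (k, 1 - j)))) = -f (Phi (.inr (.inl (k, j)))) := by
    intro k j
    simp only [hf, Phi]
    rw [← map_neg]
    congr 1
    · congr 1
      have h1 := two_tri (2 * j - k - 1)
      have h2 := two_tri (2 * (1 - j) - k - 1)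
      have h3 := sq (1 - j + k)
      have h4 := sq (j + k)
      generalize ((2 * j - k - 1) * (2 * j - k - 1 - 1) / 2).toNat = u at *
      generalize ((2 * (1 - j) - k - 1) * (2 * (1 - j) - k - 1 - 1) / 2).toNat = w at *
      generalize ((j + k) ^ 2).toNat = v at *
      generalize ((1 - j + k) ^ 2).toNat = x at *
      zify
      linarith
    · rw [show 2 * (1 - j) - k - 1 = 2 * (1 - j) + -k + -1 by ring,
        show 2 * j - k - 1 = 2 * j + -k + -1 by ring, show 1 - j + k = 1 + -j + k by ring]
      simp only [sgn_add, sgn_two_mul, sgn_neg, sgn_one]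
      ring
  have s1 : Summable (fun x => f (Phi (.inr (.inl x)))) :=
    hD'.summable.comp_injective (Sum.inr_injective.comp Sum.inl_injective)
  obtain ⟨T, hT⟩ := s1
  have hT0 : T = 0 := by
    apply eq_zero_of_neg
    refine hT.unique ?_
    rw [← ((Equiv.refl ℤ).prodCongr (Equiv.subLeft (1 : ℤ))).hasSum_iff]
    refine hs_congr hT.neg fun k => ?_
    exact f1 k.1 k.2
  have hsum : HasSum (f ∘ Phi) (A * J 2 + (T + B * J 2)) := by
    apply HasSum.sum
    · convert hA2 using 2 with x
      exact f0 x.1 x.2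
    · apply HasSum.sum
      · exact hT
      · convert hB2 using 2 with x
        exact f2 x.1 x.2
  have := hD'.unique hsum
  rw [hT0] at this
  linear_combination J 1 ^ 3 * hJφ - J 2 * this
end Quint

section Fin
open PowerSeries

theorem coeff_F (F : PowerSeries ℤ)
    (hF : open scoped PowerSeries.WithPiTopology in
      HasSum (fun k : ℤ => monomial (pentagonal (-k)) (6 * k + 1)) F) (n : ℕ) :
    (7 : ℤ) ∣ coeff (7 * n + 2) F := by
  have h := ((WithPiTopology.hasSum_iff_hasSum_coeff ℤ).1 hF) (7 * n + 2)
  have h2 : ∀ k : ℤ, (7 : ℤ) ∣ coeff (7 * n + 2) (monomial (pentagonal (-k)) (6 * k + 1)) := by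
    intro k
    rw [coeff_monomial]
    split_ifs with hk
    · have := two_mul_natCast_pentagonal_neg k
      rw [← hk] at this
      push_cast at this
      have h3 : (7 : ℤ) ∣ (6 * k + 1) ^ 2 := ⟨24 * n + 7, by linarith⟩
      exact Int.Prime.dvd_pow' (by norm_num : Nat.Prime 7) h3
    · exact dvd_zero _
  letI : TopologicalSpace (ZMod 7) := ⊥
  haveI : DiscreteTopology (ZMod 7) := ⟨rfl⟩
  have h4 := h.map (Int.castAddHom (ZMod 7)) continuous_of_discreteTopology
  have h5 : (Int.castAddHom (ZMod 7)) (coeff (7 * n + 2) F) = 0 := by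
    refine h4.unique ?_
    have h6 : ((Int.castAddHom (ZMod 7)) ∘ fun k : ℤ =>
        coeff (7 * n + 2) (monomial (R := ℤ) (pentagonal (-k)) (6 * k + 1))) = fun _ => 0 := by
      funext k
      exact (ZMod.intCast_zmod_eq_zero_iff_dvd _ 7).2 (by exact_mod_cast h2 k)
    rw [h6]
    exact hasSum_zero
  exact_mod_cast (ZMod.intCast_zmod_eq_zero_iff_dvd _ 7).1 h5

theorem pow7_coeff (w : PowerSeries (ZMod 7)) (m : ℕ) (hm : ¬ 7 ∣ m) : coeff m (w ^ 7) = 0 := by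
  have h7 : (7 : PowerSeries (ZMod 7)) = 0 := by
    refine (map_ofNat (C (R := ZMod 7)) 7).symm.trans ?_
    have h0 : (OfNat.ofNat 7 : ZMod 7) = 0 := by decide
    rw [h0, map_zero]
  have hd : derivative (ZMod 7) (w ^ 7) = 0 := by
    rw [Derivation.leibniz_pow]
    simp [h7]
  obtain ⟨k, rfl⟩ : ∃ k, m = k + 1 := ⟨m - 1, by lia⟩
  haveI : Fact (Nat.Prime 7) := ⟨by norm_num⟩
  have hc := congrArg (coeff k) hd
  rw [coeff_derivative, map_zero] at hc
  rcases mul_eq_zero.1 hc with h | h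
  · exact h
  · exfalso
    apply hm
    rw [← ZMod.natCast_eq_zero_iff]
    exact_mod_cast h
end Fin

/-- for all k ≥ 0 and n ≥ 0, `d_{7k+5}(7n + 2) ≡ 0 (mod 7)`, where for each `k`
`d_k` is defined by `∑ d_k(n) qⁿ = J_2^k / J_1^{3k+1}`. -/
theorem stmt3 (d : ℕ → ℕ → ℤ)
    (hd : ∀ k : ℕ, PowerSeries.mk (d k) * (J 1) ^ (3 * k + 1) = (J 2) ^ k)
    (k : ℕ) (n : ℕ) :
    (7 : ℤ) ∣ d (7 * k + 5) (7 * n + 2) := by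
  obtain ⟨F, hF, hJF⟩ := quint
  have h := hd (7 * k + 5)
  have hI := J_mul_II 1 (by norm_num)
  have hI' : J 1 ^ (21 * k + 21) * II 1 ^ (21 * k + 21) = 1 := by rw [← mul_pow, hI, one_pow]
  have h1 : PowerSeries.mk (d (7 * k + 5)) = (J 2 ^ (k + 1) * II 1 ^ (3 * k + 3)) ^ 7 * F := by
    have e1 : PowerSeries.mk (d (7 * k + 5)) * J 1 ^ (21 * k + 21) = J 2 ^ (7 * k + 7) * F := by
      have a1 : J 1 ^ (21 * k + 21) = J 1 ^ (3 * (7 * k + 5) + 1) * J 1 ^ 5 := by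
        rw [← pow_add]; congr 1; ring
      rw [a1, ← mul_assoc, h, hJF, ← mul_assoc, ← pow_add]
    have e2 : (J 2 ^ (k + 1) * II 1 ^ (3 * k + 3)) ^ 7 =
        J 2 ^ (7 * k + 7) * II 1 ^ (21 * k + 21) := by
      rw [mul_pow, ← pow_mul, ← pow_mul]; congr 2 <;> ring
    rw [e2]
    linear_combination II 1 ^ (21 * k + 21) * e1 - PowerSeries.mk (d (7 * k + 5)) * hI'
  have h2 : d (7 * k + 5) (7 * n + 2) =
      PowerSeries.coeff (7 * n + 2) (PowerSeries.mk (d (7 * k + 5))) := by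
    rw [PowerSeries.coeff_mk]
  rw [h2, h1]
  refine (ZMod.intCast_zmod_eq_zero_iff_dvd _ 7).1 ?_
  have h3 := PowerSeries.coeff_map (Int.castRingHom (ZMod 7)) (7 * n + 2)
    ((J 2 ^ (k + 1) * II 1 ^ (3 * k + 3)) ^ 7 * F)
  rw [eq_intCast] at h3
  rw [← h3, map_mul, map_pow, PowerSeries.coeff_mul]
  apply Finset.sum_eq_zero
  rintro ⟨i, j⟩ hij
  rw [Finset.HasAntidiagonal.mem_antidiagonal] at hij
  simp only at hij ⊢
  by_cases h7 : 7 ∣ i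
  · obtain ⟨i', rfl⟩ := h7
    obtain ⟨j', rfl⟩ : ∃ j', j = 7 * j' + 2 := ⟨n - i', by lia⟩
    have := coeff_F F hF j'
    rw [PowerSeries.coeff_map, eq_intCast, (ZMod.intCast_zmod_eq_zero_iff_dvd _ 7).2 (by exact_mod_cast this), mul_zero]
  · rw [pow7_coeff _ _ h7, zero_mul]
end
end

section
/- For every formal Laurent series u in q with integer coefficients and every integer j, U_7(u·t^j) = ∑_{l=0}^{6} a_l(t)·U_7(u·t^{j+l−7}). -/
noncomputable section

/-- The polynomials `a_0, …, a_6` of Theorem 2.6 (evaluated at `x`). -/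
def aPoly {R : Type*} [CommRing R] (l : ℕ) (x : R) : R :=
  match l with
  | 0 => x
  | 1 => 7 ^ 2 * x ^ 2 + 4 * 7 * x
  | 2 => 7 ^ 4 * x ^ 3 + 4 * 7 ^ 3 * x ^ 2 + 46 * 7 * x
  | 3 => 7 ^ 6 * x ^ 4 + 4 * 7 ^ 5 * x ^ 3 + 46 * 7 ^ 3 * x ^ 2 + 272 * 7 * x
  | 4 => 7 ^ 8 * x ^ 5 + 4 * 7 ^ 7 * x ^ 4 + 46 * 7 ^ 5 * x ^ 3 + 272 * 7 ^ 3 * x ^ 2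
      + 845 * 7 * x
  | 5 => 7 ^ 10 * x ^ 6 + 4 * 7 ^ 9 * x ^ 5 + 46 * 7 ^ 7 * x ^ 4 + 272 * 7 ^ 5 * x ^ 3
      + 845 * 7 ^ 3 * x ^ 2 + 176 * 7 ^ 2 * x
  | 6 => 7 ^ 12 * x ^ 7 + 4 * 7 ^ 11 * x ^ 6 + 46 * 7 ^ 9 * x ^ 5 + 272 * 7 ^ 7 * x ^ 4
      + 845 * 7 ^ 5 * x ^ 3 + 176 * 7 ^ 4 * x ^ 2 + 82 * 7 ^ 2 * x
  | _ => 0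

set_option linter.all false

section
theorem alg1 {K : Type*} [CommRing K] (a b c : K) (hc : c = a ^ 2 - a * b ^ 2)
    (h : a * b * c = -1) (T x : K) (hT : T = -(a ^ 3 * b + b ^ 3 * c + c ^ 3 * a) - 8)
    (hx : x = a + b + c - 1) :
    x ^ 7 + 7 * x ^ 6 + 21 * x ^ 5 + 49 * x ^ 4 + (147 + 7 * T) * x ^ 3
      + (343 + 35 * T) * x ^ 2 + (343 + 49 * T) * x - T ^ 2 = 0 := by
  subst hT hx hc
  linear_combination (
      -a^10*b + 5*a^9*b^3 + 7*a^9 - 10*a^8*b^5 - 35*a^8*b^2 + 21*a^8 + 10*a^7*b^7 + 70*a^7*b^4 -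
      84*a^7*b^2 + 35*a^7*b + 62*a^7 - 5*a^6*b^9 - 70*a^6*b^6 + 126*a^6*b^4 - 126*a^6*b^3 -
      191*a^6*b^2 + 112*a^6*b + 84*a^6 + a^5*b^11 + 35*a^5*b^8 - 84*a^5*b^6 + 168*a^5*b^5 +
      199*a^5*b^4 - 308*a^5*b^3 - 112*a^5*b^2 + 224*a^5*b + 56*a^5 - 7*a^4*b^10 + 21*a^4*b^8 -
      98*a^4*b^7 - 73*a^4*b^6 + 280*a^4*b^5 - 56*a^4*b^4 - 434*a^4*b^3 + 84*a^4*b^2 + 196*a^4*b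
      - 28*a^4 + 21*a^3*b^9 + 3*a^3*b^8 - 84*a^3*b^7 + 112*a^3*b^6 + 217*a^3*b^5 - 252*a^3*b^4 -
      168*a^3*b^3 + 280*a^3*b^2 + 70*a^3*b - 84*a^3 - 28*a^2*b^8 - 7*a^2*b^7 + 112*a^2*b^6 -
      35*a^2*b^5 - 238*a^2*b^4 + 52*a^2*b^3 + 168*a^2*b^2 - 84*a^2*b - 70*a^2 + 14*a*b^7 +
      7*a*b^6 - 61*a*b^5 + 140*a*b^3 + 28*a*b^2 - 84*a*b - 28*a + b^7 + 14*b^4 - 42*b^2 - 28*b -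
      9) * h


theorem alg2 {K : Type*} [Field K] (T x t V : K) (hT0 : T ≠ 0) (hx0 : x ≠ 0)
    (ht : t * x ^ 4 = T) (hV : V * T = 1)
    (h : x ^ 7 + 7 * x ^ 6 + 21 * x ^ 5 + 49 * x ^ 4 + (147 + 7 * T) * x ^ 3
      + (343 + 35 * T) * x ^ 2 + (343 + 49 * T) * x - T ^ 2 = 0) :
    t ^ 7 = ∑ l ∈ Finset.range 7, aPoly l V * t ^ l := by
  obtain rfl : V = 1 / T := by field_simp; exact hV
  obtain rfl : t = T / x ^ 4 := by field_simp; exact ht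
  rw [← sub_eq_zero]
  have key : (T / x ^ 4) ^ 7 - ∑ l ∈ Finset.range 7, aPoly l (1 / T) * (T / x ^ 4) ^ l
      = ((-x^21 + 7*x^20 - 28*x^19 + 98*x^18 - 21*x^17*T - 343*x^17 + 133*x^16*T + 1029*x^16 -
      490*x^15*T - 2744*x^15 - x^14*T^2 + 1617*x^14*T + 7203*x^14 - 161*x^13*T^2 - 5488*x^13*T -
      19208*x^13 + 924*x^12*T^2 + 16121*x^12*T + 50421*x^12 - 3136*x^11*T^2 - 43218*x^11*T -
      134456*x^11 - 14*x^10*T^3 + 9555*x^10*T^2 + 112847*x^10*T + 352947*x^10 - 511*x^9*T^3 -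
      31213*x^9*T^2 - 302526*x^9*T - 941192*x^9 + 2597*x^8*T^3 + 88494*x^8*T^2 + 789929*x^8*T +
      2470629*x^8 - x^7*T^4 - 7644*x^7*T^3 - 218491*x^7*T^2 - 1882384*x^7*T - 5764801*x^7 -
      56*x^6*T^4 + 18179*x^6*T^3 + 468195*x^6*T^2 + 3882417*x^6*T + 11529602*x^6 - 511*x^5*T^4 -
      53508*x^5*T^3 - 1075648*x^5*T^2 - 8235430*x^5*T - 23059204*x^5 + 2058*x^4*T^4 +
      127253*x^4*T^3 + 2218524*x^4*T^2 + 15647317*x^4*T + 40353607*x^4 - 7*x^3*T^5 -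
      3577*x^3*T^4 - 175273*x^3*T^3 - 2705927*x^3*T^2 - 17294403*x^3*T - 40353607*x^3 -
      35*x^2*T^5 - 2744*x^2*T^4 - 33614*x^2*T^3 - 117649*x^2*T^2 - 49*x*T^5 - 343*x*T^4 - T^6) * (x ^ 7 + 7 * x ^ 6 + 21 * x ^ 5 + 49 * x ^ 4 + (147 + 7 * T) * x ^ 3
      + (343 + 35 * T) * x ^ 2 + (343 + 49 * T) * x - T ^ 2)) / (T * x ^ 28) := by
    simp only [Finset.sum_range_succ, Finset.sum_range_zero, aPoly]
    rw [eq_div_iff (by positivity)]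
    field_simp
    ring
  rw [key, h, mul_zero, zero_div]
end

section
open PowerSeries

def qp (n : ℕ) : PowerSeries ℤ := ∏ k ∈ Finset.range n, (1 - (X : PowerSeries ℤ) ^ (k + 1))

theorem qp_succ (n : ℕ) : qp (n + 1) = qp n * (1 - X ^ (n + 1)) := by
  simp [qp, Finset.prod_range_succ]

theorem qp_dvd (n m : ℕ) : (X : PowerSeries ℤ) ^ (n + 1) ∣ qp (n + m) - qp n := by
  induction m with
  | zero => simp
  | succ m ih =>
    have : qp (n + (m + 1)) - qp n = (qp (n + m) - qp n) - X ^ (n + 1) * (X ^ m * qp (n + m)) := by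
      rw [← add_assoc, qp_succ]; ring
    rw [this]
    exact dvd_sub ih (dvd_mul_right _ _)

theorem J1_coeff (n m : ℕ) (h : m ≤ n) : coeff m (J 1) = coeff m (qp n) := by
  have h1 : coeff m (J 1) = coeff m (qp (m + 1)) := by simp [J, qp]
  have h2 := (X_pow_dvd_iff.1 (qp_dvd m 1)) m (by omega)
  have h3 := (X_pow_dvd_iff.1 (qp_dvd m (n - m))) m (by omega)
  rw [map_sub, sub_eq_zero] at h2 h3
  rw [h1, h2, ← h3]; congr 2; omega

theorem J1_dvd (n : ℕ) : (X : PowerSeries ℤ) ^ (n + 1) ∣ J 1 - qp n := by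
  rw [X_pow_dvd_iff]
  intro m hm
  rw [map_sub, J1_coeff n m (by omega), sub_self]

theorem J1_pent : J 1 = pentagonalSeries ℤ := by
  ext n
  obtain ⟨s, hs⟩ := Filter.eventually_atTop.1 (coeff_prod_one_sub_X_pow_eventually_eq ℤ n)
  obtain ⟨N, hN⟩ := s.exists_nat_subset_range
  rw [← hs (Finset.range (N + n)) (hN.trans (by simp)), J1_coeff (N + n) n (by omega), qp]

theorem J_expand (b : ℕ) (hb : b ≠ 0) : J b = expand b hb (J 1) := by
  ext n
  have h := map_dvd (expand b hb) (J1_dvd (n + 1))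
  rw [map_pow, expand_X, ← pow_mul, X_pow_dvd_iff] at h
  have h1 := h n (by nlinarith [Nat.pos_of_ne_zero hb])
  rw [map_sub, map_sub, sub_eq_zero] at h1
  rw [h1]
  simp [J, qp, map_prod, pow_mul]

theorem qp_ne (n : ℕ) : constantCoeff (qp n) = 1 := by
  simp [qp, map_prod]
end

section
section jac
open Polynomial
variable {R : Type*} [CommRing R] [IsDomain R]

def Pz (q : R) (n : ℕ) : R[X] :=
  (X - 1) * ∏ i ∈ Finset.range n, ((1 - C (q ^ (i + 1)) * X) * (X - C (q ^ (i + 1))))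

theorem Pz_succ (q : R) (n : ℕ) :
    Pz q (n + 1) = Pz q n * ((1 - C (q ^ (n + 1)) * X) * (X - C (q ^ (n + 1)))) := by
  simp [Pz, Finset.prod_range_succ, mul_assoc]

theorem Pz_fe (q : R) (n : ℕ) :
    (Pz q n).comp (C q * X) * (X - C (q ^ n)) = -C (q ^ n) * ((Pz q n) * (1 - C (q ^ (n + 1)) * X)) := by
  induction n with
  | zero => simp [Pz]; ring
  | succ n ih =>
    rw [Pz_succ]
    simp only [mul_comp, sub_comp, one_comp, C_comp, X_comp, pow_comp, C_pow] at ih ⊢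
    linear_combination (C q * (1 - C q ^ (n + 2) * X) * (X - C q ^ (n + 1))) * ih

theorem Pz_rec (q : R) (hq : q ≠ 0) (n k : ℕ) :
    (Pz q n).coeff (n + k + 1) * (1 - q ^ (n + k + 1)) =
      - q ^ k * (Pz q n).coeff (n + k) + q ^ (n + 1) * (Pz q n).coeff (n + k) := by
  have h := congrArg (fun p => coeff p (n + k + 1)) (Pz_fe q n)
  have e : Pz q n * (1 - C (q ^ (n + 1)) * X) = Pz q n - C (q ^ (n + 1)) * (Pz q n * X) := by ring
  simp only [e, coeff_mul_X_sub_C, comp_C_mul_X_coeff, neg_mul, coeff_neg, coeff_C_mul, coeff_sub,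
    coeff_mul_X] at h
  apply mul_left_cancel₀ (pow_ne_zero n hq)
  linear_combination h

theorem Pz_deg (q : R) (n : ℕ) : (Pz q n).natDegree ≤ 2 * n + 1 := by
  induction n with
  | zero => simp only [Pz]; simp; compute_degree
  | succ n ih =>
    rw [Pz_succ]
    refine natDegree_mul_le.trans ?_
    have : ((1 - C (q ^ (n + 1)) * X) * (X - C (q ^ (n + 1)))).natDegree ≤ 2 := by compute_degree
    omega

theorem Pz_refl (q : R) (n : ℕ) : reflect (2 * n + 1) (Pz q n) = - Pz q n := by
  induction n with
  | zero =>
    simp only [Pz, Finset.range_zero, Finset.prod_empty, mul_one]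
    have h1 : reflect 1 (X : R[X]) = 1 := by simpa using reflect_C_mul_X_pow 1 1 (1 : R)
    have h2 : reflect 1 (1 : R[X]) = X := by simpa using reflect_C (1 : R) 1
    simp [reflect_sub, h1, h2]
  | succ n ih =>
    rw [Pz_succ, show 2 * (n + 1) + 1 = (2 * n + 1) + (1 + 1) by ring,
      reflect_mul _ _ (Pz_deg q n) (by compute_degree), ih,
      reflect_mul _ _ (by compute_degree) (by compute_degree)]
    have h1 : reflect 1 (X : R[X]) = 1 := by simpa using reflect_C_mul_X_pow 1 1 (1 : R)
    have h2 : reflect 1 (1 : R[X]) = X := by simpa using reflect_C (1 : R) 1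
    simp only [reflect_sub, reflect_C_mul, h1, h2, reflect_C]
    ring

theorem Pz_symm (q : R) (n j : ℕ) (hj : j ≤ 2 * n + 1) :
    (Pz q n).coeff (2 * n + 1 - j) = - (Pz q n).coeff j := by
  rw [← coeff_neg, ← Pz_refl, coeff_reflect, revAt_le hj]

theorem Pz_deriv (q : R) (n : ℕ) :
    ∑ k ∈ Finset.range (n + 1), (2 * (k : R) + 1) * (Pz q n).coeff (n + 1 + k) =
      (∏ i ∈ Finset.range n, (1 - q ^ (i + 1))) ^ 2 := by
  have h1 : (derivative (Pz q n)).eval 1 = (∏ i ∈ Finset.range n, (1 - q ^ (i + 1))) ^ 2 := by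
    rw [Pz, derivative_mul]
    simp [eval_prod, Finset.prod_mul_distrib, sq]
  have h2 : (derivative (Pz q n)).eval 1 = ∑ j ∈ Finset.range ((n + 1) + (n + 1)), (j : R) * (Pz q n).coeff j := by
    rw [derivative_eval, sum_over_range' _ _ ((n + 1) + (n + 1)) (by have := Pz_deg q n; omega)]
    · exact Finset.sum_congr rfl fun j _ => by simp [mul_comm]
    · simp
  rw [← h1, h2, Finset.sum_range_add (fun j => (j : R) * (Pz q n).coeff j) (n + 1) (n + 1),
    ← Finset.sum_range_reflect (fun j => (j : R) * (Pz q n).coeff j) (n + 1),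
    ← Finset.sum_add_distrib]
  apply Finset.sum_congr rfl
  intro k hk
  have hk : k ≤ n := by simpa [Nat.lt_succ_iff] using hk
  have := Pz_symm q n (n + 1 + k) (by omega)
  rw [show n + 1 - 1 - k = n - k by omega]
  rw [show 2 * n + 1 - (n + 1 + k) = n - k by omega] at this
  rw [this]; push_cast [hk]; ring

theorem Pz_lead (q : R) (n : ℕ) : (Pz q n).coeff (2 * n + 1) = (-1) ^ n * ∏ i ∈ Finset.range n, q ^ (i + 1) := by
  have := Pz_symm q n 0 (by omega)
  rw [Nat.sub_zero] at this
  rw [this, coeff_zero_eq_eval_zero, Pz]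
  simp [eval_prod, Finset.prod_neg]

theorem Pz_tel (q : R) (hq : q ≠ 0) (n k : ℕ) (hk : k ≤ n) :
    (Pz q n).coeff (n + 1 + k) * ∏ i ∈ Finset.range k, (1 - q ^ (n + 2 + i)) =
     (-1) ^ k * (∏ i ∈ Finset.range k, q ^ (i + 1)) * (∏ i ∈ Finset.range k, (1 - q ^ (n - i)))
      * (Pz q n).coeff (n + 1) := by
  induction k with
  | zero => simp
  | succ k ih =>
    have h := Pz_rec q hq n (k + 1)
    have ih := ih (by omega)
    simp only [Finset.prod_range_succ]
    rw [show n + (k + 1) + 1 = n + 1 + (k + 1) by ring, show n + (k + 1) = n + 1 + k by ring] at h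
    have e : q ^ (n + 1) = q ^ (k + 1) * q ^ (n - k) := by rw [← pow_add]; congr 1; omega
    have e2 : q ^ (n + 2 + k) = q ^ (n + 1 + (k + 1)) := by congr 1; ring
    rw [e] at h
    rw [e2]
    generalize q ^ (n + 1 + (k+1)) = A at *
    linear_combination (∏ i ∈ Finset.range k, (1 - q ^ (n + 2 + i))) * h - q ^ (k + 1) * (1 - q ^ (n - k)) * ih

theorem Pz_mid (q : R) (hq : q ≠ 0) (n : ℕ) :
    ∏ i ∈ Finset.range n, (1 - q ^ (n + 2 + i)) =
      (∏ i ∈ Finset.range n, (1 - q ^ (i + 1))) * (Pz q n).coeff (n + 1) := by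
  have h := Pz_tel q hq n n le_rfl
  rw [show n + 1 + n = 2 * n + 1 by ring, Pz_lead] at h
  have h3 : ∏ i ∈ Finset.range n, (1 - q ^ (n - i)) = ∏ i ∈ Finset.range n, (1 - q ^ (i + 1)) := by
    rw [← Finset.prod_range_reflect]
    refine Finset.prod_congr rfl fun i hi => ?_
    have := Finset.mem_range.1 hi
    congr 2; omega
  rw [h3] at h
  have h0 : (-1 : R) ^ n * ∏ i ∈ Finset.range n, q ^ (i + 1) ≠ 0 :=
    mul_ne_zero (by simp) (Finset.prod_ne_zero_iff.2 fun i _ => pow_ne_zero _ hq)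
  apply mul_left_cancel₀ h0
  linear_combination h

theorem Pz_cong (q : R) (hq : q ≠ 0) (n k : ℕ) :
    q ^ (n + 1) ∣ (Pz q n).coeff (n + 1 + k) - (-1) ^ k * (∏ i ∈ Finset.range k, q ^ (i + 1)) * (Pz q n).coeff (n + 1) := by
  induction k with
  | zero => simp
  | succ k ih =>
    obtain ⟨d, hd⟩ := ih
    have h := Pz_rec q hq n (k + 1)
    rw [show n + (k + 1) + 1 = n + 1 + (k + 1) by ring, show n + (k + 1) = n + 1 + k by ring] at h
    rw [Finset.prod_range_succ]
    refine ⟨- q ^ (k + 1) * d + (Pz q n).coeff (n + 1 + k) + q ^ (k + 1) * (Pz q n).coeff (n + 1 + (k + 1)), ?_⟩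
    rw [pow_add q (n+1) (k+1)] at h
    linear_combination h - q ^ (k + 1) * hd

theorem prod_one_sub_cong (q : R) (m n : ℕ) : q ^ m ∣ ∏ i ∈ Finset.range n, (1 - q ^ (m + i)) - 1 := by
  induction n with
  | zero => simp
  | succ n ih =>
    rw [Finset.prod_range_succ]
    obtain ⟨d, hd⟩ := ih
    refine ⟨d - q ^ n * ∏ i ∈ Finset.range n, (1 - q ^ (m + i)), ?_⟩
    rw [pow_add]
    linear_combination hd

theorem jac_fin (q : R) (hq : q ≠ 0) (n : ℕ) :
    q ^ (n + 1) ∣ (∏ i ∈ Finset.range n, (1 - q ^ (i + 1))) ^ 3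
      - ∑ k ∈ Finset.range (n + 1), (2 * (k : R) + 1) * ((-1) ^ k * ∏ i ∈ Finset.range k, q ^ (i + 1)) := by
  set A := ∏ i ∈ Finset.range n, (1 - q ^ (i + 1)) with hA
  set S := ∑ k ∈ Finset.range (n + 1), (2 * (k : R) + 1) * ((-1) ^ k * ∏ i ∈ Finset.range k, q ^ (i + 1))
  have h1 : q ^ (n + 1) ∣ A ^ 2 - S * (Pz q n).coeff (n + 1) := by
    rw [← Pz_deriv, Finset.sum_mul, ← Finset.sum_sub_distrib]
    refine Finset.dvd_sum fun k _ => ?_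
    have := (Pz_cong q hq n k).mul_left (2 * (k : R) + 1)
    convert this using 1; ring
  have h2 : q ^ (n + 1) ∣ A * (Pz q n).coeff (n + 1) - 1 := by
    rw [← Pz_mid q hq]
    exact (pow_dvd_pow q (by omega)).trans (prod_one_sub_cong q (n + 2) n)
  have := dvd_add (h1.mul_left A) (h2.mul_left S)
  convert this using 1; ring

end jac

open PowerSeries

def tri (k : ℕ) : ℕ := ∑ i ∈ Finset.range k, (i + 1)

theorem two_tri_s5 (k : ℕ) : 2 * tri k = k * (k + 1) := by
  induction k with
  | zero => simp [tri]
  | succ k ih =>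
    have : tri (k + 1) = tri k + (k + 1) := by simp [tri, Finset.sum_range_succ]
    rw [this]; linarith

theorem tri_inj {k l : ℕ} (h : tri k = tri l) : k = l := by
  have h1 := two_tri_s5 k
  have h2 := two_tri_s5 l
  rw [h] at h1
  nlinarith [lt_trichotomy k l]

theorem le_tri (k : ℕ) : k ≤ tri k := by
  have h1 := two_tri_s5 k
  nlinarith

theorem jac_dvd (n : ℕ) : (X : PowerSeries ℤ) ^ (n + 1) ∣ (J 1) ^ 3 -
    ∑ k ∈ Finset.range (n + 1), (2 * (k : PowerSeries ℤ) + 1) * ((-1) ^ k * X ^ tri k) := by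
  have h := jac_fin (X : PowerSeries ℤ) X_ne_zero n
  simp only [Finset.prod_pow_eq_pow_sum] at h
  have h2 := (J1_dvd n).trans (sub_dvd_pow_sub_pow (J 1) (qp n) 3)
  have := dvd_add h2 h
  simpa [qp, tri] using this

theorem coeff_jac (m : ℕ) : coeff m ((J 1) ^ 3) =
    ∑ k ∈ Finset.range (m + 1), if m = tri k then (2 * (k : ℤ) + 1) * (-1) ^ k else 0 := by
  have h := X_pow_dvd_iff.1 (jac_dvd m) m (by omega)
  rw [map_sub, sub_eq_zero] at h
  rw [h, map_sum]
  refine Finset.sum_congr rfl fun k _ => ?_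
  have : (2 * (k : PowerSeries ℤ) + 1) * ((-1) ^ k * X ^ tri k) = C ((2 * (k : ℤ) + 1) * (-1) ^ k) * X ^ tri k := by
    simp; ring
  rw [this, coeff_C_mul, coeff_X_pow]; simp

theorem coeff_jac_tri (k : ℕ) : coeff (tri k) ((J 1) ^ 3) = (2 * (k : ℤ) + 1) * (-1) ^ k := by
  rw [coeff_jac, Finset.sum_eq_single k]
  · simp
  · intro l _ hl
    rw [if_neg fun h => hl (tri_inj h).symm]
  · intro h; exact absurd (Finset.mem_range.2 (Nat.lt_succ_of_le (le_tri k))) h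

theorem coeff_jac_not (m : ℕ) (h : ∀ k, m ≠ tri k) : coeff m ((J 1) ^ 3) = 0 := by
  rw [coeff_jac]; exact Finset.sum_eq_zero fun k _ => if_neg (h k)
end

section
open PowerSeries

def Res {R : Type*} [CommRing R] (r : ZMod 7) (f : PowerSeries R) : Prop := ∀ n : ℕ, (n : ZMod 7) ≠ r → coeff n f = 0

section
variable {R : Type*} [CommRing R]
theorem Res.add {r : ZMod 7} {f g : PowerSeries R} (hf : Res r f) (hg : Res r g) : Res r (f + g) :=
  fun n hn => by rw [map_add, hf n hn, hg n hn, add_zero]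
theorem Res.sub {r : ZMod 7} {f g : PowerSeries R} (hf : Res r f) (hg : Res r g) : Res r (f - g) :=
  fun n hn => by rw [map_sub, hf n hn, hg n hn, sub_zero]
theorem Res.smul {r : ZMod 7} {f : PowerSeries R} (k : ℤ) (hf : Res r f) : Res r (k • f) :=
  fun n hn => by rw [map_zsmul, hf n hn, smul_zero]
theorem Res.mul {r s t : ZMod 7} {f g : PowerSeries R} (hf : Res r f) (hg : Res s g) (h : r + s = t) :
    Res t (f * g) := by
  intro n hn
  rw [coeff_mul]
  refine Finset.sum_eq_zero fun p hp => ?_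
  rw [Finset.HasAntidiagonal.mem_antidiagonal] at hp
  by_cases h1 : (p.1 : ZMod 7) = r
  · rw [hg p.2, mul_zero]
    intro h2
    exact hn (by rw [← h, ← h1, ← h2, ← hp]; push_cast; rfl)
  · rw [hf _ h1, zero_mul]
end

def dis (r : ZMod 7) (f : PowerSeries ℤ) : PowerSeries ℤ :=
  mk fun n => if (n : ZMod 7) = r then coeff n f else 0

theorem dis_res (r : ZMod 7) (f : PowerSeries ℤ) : Res r (dis r f) := fun n hn => by
  rw [dis, coeff_mk, if_neg hn]

def wS : PowerSeries ℤ := X ^ 2 * J 49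

theorem J49_res : Res 0 (J 49) := by
  intro n hn
  rw [J_expand 49 (by norm_num), coeff_expand_of_not_dvd]
  intro h
  apply hn
  rw [ZMod.natCast_eq_zero_iff]
  exact (by norm_num : 7 ∣ 49).trans h

theorem Xpow_res {R : Type*} [CommRing R] (k : ℕ) (r : ZMod 7) (h : (k : ZMod 7) = r) : Res r (X ^ k : PowerSeries R) := by
  intro n hn
  rw [coeff_X_pow, if_neg]
  rintro rfl; exact hn h

theorem wS_res : Res 2 wS := Res.mul (Xpow_res 2 2 rfl) J49_res (by decide)

theorem zmod_pent (n k : ZMod 7) (h : 2 * n = k * (3 * k - 1)) :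
    (n = 0 ∨ n = 1 ∨ n = 5 ∨ (n = 2 ∧ k = 6)) := by
  revert n k; decide

theorem zmod_tri (n k : ZMod 7) (h : 2 * n = k * (k + 1)) :
    n ≠ 2 ∧ (n = 6 → k = 3) := by
  revert n k; decide

theorem coeff_shift (k n : ℕ) (f : PowerSeries ℤ) (h : k ≤ n) : coeff n (X ^ k * f) = coeff (n - k) f := by
  rw [coeff_X_pow_mul', if_pos h]

theorem pent_shift (l : ℤ) : pentagonal (7 * l - 1) = 49 * pentagonal l + 2 := by
  have h1 := two_mul_natCast_pentagonal l
  have h2 := two_mul_natCast_pentagonal (7 * l - 1)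
  zify
  linarith

theorem tri_shift (l : ℕ) : tri (7 * l + 3) = 49 * tri l + 6 := by
  have h1 := two_tri_s5 l
  have h2 := two_tri_s5 (7 * l + 3)
  nlinarith

theorem coeff_J1_two (n : ℕ) (h : (n : ZMod 7) = 2) : coeff n (J 1) = - coeff n wS := by
  have hn : 2 ≤ n := by
    by_contra hlt
    interval_cases n <;> revert h <;> decide
  rw [wS, coeff_shift _ _ _ hn, J_expand 49 (by norm_num), coeff_expand, J1_pent]
  by_cases hp : n ∈ Set.range pentagonal
  · obtain ⟨k, rfl⟩ := hp
    have h2 := congrArg (Int.cast : ℤ → ZMod 7) (two_mul_natCast_pentagonal k)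
    push_cast at h2
    have h3 := zmod_pent _ _ h2
    rw [h] at h3
    have hk : (k : ZMod 7) = 6 := by
      rcases h3 with h | h | h | h
      · exact absurd h (by decide)
      · exact absurd h (by decide)
      · exact absurd h (by decide)
      · exact h.2
    have hk' : ((k + 1 : ℤ) : ZMod 7) = 0 := by push_cast; rw [hk]; decide
    obtain ⟨l, hl⟩ := (ZMod.intCast_zmod_eq_zero_iff_dvd _ 7).1 hk'
    obtain rfl : k = 7 * l - 1 := by push_cast at hl; omega
    rw [coeff_pentagonalSeries_pentagonal, pent_shift]
    simp only [Nat.add_sub_cancel, dvd_mul_right, if_true]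
    rw [Nat.mul_div_cancel_left _ (by norm_num), coeff_pentagonalSeries_pentagonal]
    have : Int.negOnePow (7 * l - 1) = - Int.negOnePow l := by
      rw [show 7 * l - 1 = l + (2 * (3 * l - 1) + 1) by ring, Int.negOnePow_add, Int.negOnePow_succ,
        Int.negOnePow_two_mul]
      simp
    rw [this]; simp
  · rw [coeff_pentagonalSeries_eq_zero _ hp]
    split_ifs with hd
    · obtain ⟨m, hm⟩ := hd
      rw [hm, Nat.mul_div_cancel_left _ (by norm_num), coeff_pentagonalSeries_eq_zero, neg_zero]
      rintro ⟨l, rfl⟩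
      exact hp ⟨7 * l - 1, by rw [pent_shift]; omega⟩
    · simp

theorem J1_dis : J 1 = dis 0 (J 1) + dis 1 (J 1) + dis 5 (J 1) - wS := by
  ext n
  simp only [map_sub, map_add, dis, coeff_mk]
  by_cases h2 : (n : ZMod 7) = 2
  · rw [coeff_J1_two n h2, h2]
    have a1 : ¬ (2 : ZMod 7) = 0 := by decide
    have a2 : ¬ (2 : ZMod 7) = 1 := by decide
    have a3 : ¬ (2 : ZMod 7) = 5 := by decide
    simp [a1, a2, a3]
  · rw [wS_res n h2]
    by_cases hp : n ∈ Set.range pentagonal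
    · obtain ⟨k, rfl⟩ := hp
      have h3 := congrArg (Int.cast : ℤ → ZMod 7) (two_mul_natCast_pentagonal k)
      push_cast at h3
      have b1 : ¬ (0 : ZMod 7) = 1 := by decide
      have b2 : ¬ (0 : ZMod 7) = 5 := by decide
      have b3 : ¬ (1 : ZMod 7) = 0 := by decide
      have b4 : ¬ (1 : ZMod 7) = 5 := by decide
      have b5 : ¬ (5 : ZMod 7) = 0 := by decide
      have b6 : ¬ (5 : ZMod 7) = 1 := by decide
      rcases zmod_pent _ _ h3 with h | h | h | h
      · rw [h, if_pos rfl, if_neg b1, if_neg b2]; ring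
      · rw [h, if_pos rfl, if_neg b3, if_neg b4]; ring
      · rw [h, if_pos rfl, if_neg b5, if_neg b6]; ring
      · exact absurd h.1 h2
    · have : coeff n (J 1) = 0 := by rw [J1_pent, coeff_pentagonalSeries_eq_zero _ hp]
      simp [this]

theorem coeff_cube_two (n : ℕ) (h : (n : ZMod 7) = 2) : coeff n ((J 1) ^ 3) = 0 := by
  apply coeff_jac_not
  rintro k rfl
  have h2 := congrArg (Nat.cast : ℕ → ZMod 7) (two_tri_s5 k)
  push_cast at h2
  exact (zmod_tri _ _ h2).1 h

theorem coeff_cube_six (n : ℕ) (h : (n : ZMod 7) = 6) : coeff n ((J 1) ^ 3) = -7 * coeff n (wS ^ 3) := by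
  have hn : 6 ≤ n := by
    by_contra hlt
    interval_cases n <;> revert h <;> decide
  have hw : wS ^ 3 = X ^ 6 * expand 49 (by norm_num) ((J 1) ^ 3) := by
    rw [map_pow, ← J_expand, wS]; ring
  rw [hw, coeff_shift _ _ _ hn, coeff_expand]
  by_cases hp : ∃ k, n = tri k
  · obtain ⟨k, rfl⟩ := hp
    have h2 := congrArg (Nat.cast : ℕ → ZMod 7) (two_tri_s5 k)
    push_cast at h2
    have hk := (zmod_tri _ _ h2).2 h
    have hk' : k % 7 = 3 := by
      have : (k : ZMod 7) = (3 : ℕ) := by rw [hk]; rfl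
      exact (ZMod.natCast_eq_natCast_iff' k 3 7).1 this
    obtain ⟨l, rfl⟩ : ∃ l, k = 7 * l + 3 := ⟨k / 7, by omega⟩
    rw [coeff_jac_tri, tri_shift]
    simp only [Nat.add_sub_cancel, dvd_mul_right, if_true]
    rw [Nat.mul_div_cancel_left _ (by norm_num), coeff_jac_tri, pow_add, pow_mul]
    push_cast
    norm_num
    ring
  · push Not at hp
    rw [coeff_jac_not _ hp]
    split_ifs with hd
    · obtain ⟨m, hm⟩ := hd
      rw [hm, Nat.mul_div_cancel_left _ (by norm_num), coeff_jac_not, mul_zero]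
      rintro l rfl
      exact hp (7 * l + 3) (by rw [tri_shift]; omega)
    · simp

theorem rels : dis 0 (J 1) * dis 1 (J 1) * dis 5 (J 1) = - wS ^ 3 ∧
    dis 0 (J 1) * dis 1 (J 1) ^ 2 - dis 0 (J 1) ^ 2 * wS + dis 5 (J 1) * wS ^ 2 = 0 := by
  have hJ := J1_dis
  have ha := dis_res 0 (J 1)
  have hb := dis_res 1 (J 1)
  have hc := dis_res 5 (J 1)
  have hw := wS_res
  have c2 := coeff_cube_two
  have c6 := coeff_cube_six
  generalize hj : J 1 = j at *
  generalize dis 0 j = a at *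
  generalize dis 1 j = b at *
  generalize dis 5 j = c at *
  generalize wS = w at *
  have F0 : Res 0 (a * a * a + (3 : ℤ) • (b * b * c) - (6 : ℤ) • (a * c * w)) :=
    .sub (.add (.mul (.mul ha ha (t := 0) (by decide)) ha (by decide)) (.smul _ (.mul (.mul hb hb (t := 2) (by decide)) hc (by decide))))
      (.smul _ (.mul (.mul ha hc (t := 5) (by decide)) hw (by decide)))
  have F1 : Res 1 (c * c * c + (3 : ℤ) • (a * a * b) - (6 : ℤ) • (b * c * w)) :=
    .sub (.add (.mul (.mul hc hc (t := 3) (by decide)) hc (by decide)) (.smul _ (.mul (.mul ha ha (t := 0) (by decide)) hb (by decide))))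
      (.smul _ (.mul (.mul hb hc (t := 6) (by decide)) hw (by decide)))
  have F2 : Res 2 (a * b * b - a * a * w + c * w * w) :=
    .add (.sub (.mul (.mul ha hb (t := 1) (by decide)) hb (by decide)) (.mul (.mul ha ha (t := 0) (by decide)) hw (by decide)))
      (.mul (.mul hc hw (t := 0) (by decide)) hw (by decide))
  have F3 : Res 3 (b * b * b + (3 : ℤ) • (a * c * c) - (6 : ℤ) • (a * b * w)) :=
    .sub (.add (.mul (.mul hb hb (t := 2) (by decide)) hb (by decide)) (.smul _ (.mul (.mul ha hc (t := 5) (by decide)) hc (by decide))))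
      (.smul _ (.mul (.mul ha hb (t := 1) (by decide)) hw (by decide)))
  have F4 : Res 4 (b * c * c - b * b * w + a * w * w) :=
    .add (.sub (.mul (.mul hb hc (t := 6) (by decide)) hc (by decide)) (.mul (.mul hb hb (t := 2) (by decide)) hw (by decide)))
      (.mul (.mul ha hw (t := 2) (by decide)) hw (by decide))
  have F5 : Res 5 (a * a * c - c * c * w + b * w * w) :=
    .add (.sub (.mul (.mul ha ha (t := 0) (by decide)) hc (by decide)) (.mul (.mul hc hc (t := 3) (by decide)) hw (by decide)))
      (.mul (.mul hb hw (t := 3) (by decide)) hw (by decide))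
  have W3 : Res 6 (w ^ 3) := by
    rw [show w ^ 3 = w * w * w by ring]
    exact .mul (.mul hw hw (t := 4) (by decide)) hw (by decide)
  have F6 : Res 6 (a * b * c) := .mul (.mul ha hb (t := 1) (by decide)) hc (by decide)
  have key : j ^ 3 = (a * a * a + (3 : ℤ) • (b * b * c) - (6 : ℤ) • (a * c * w))
     + (c * c * c + (3 : ℤ) • (a * a * b) - (6 : ℤ) • (b * c * w))
     + (3 : ℤ) • (a * b * b - a * a * w + c * w * w)
     + (b * b * b + (3 : ℤ) • (a * c * c) - (6 : ℤ) • (a * b * w))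
     + (3 : ℤ) • (b * c * c - b * b * w + a * w * w)
     + (3 : ℤ) • (a * a * c - c * c * w + b * w * w)
     + ((6 : ℤ) • (a * b * c) - w ^ 3) := by
    rw [hJ]; simp only [zsmul_eq_mul]; push_cast; ring
  constructor
  · ext n
    by_cases h : (n : ZMod 7) = 6
    · have := c6 n h
      rw [key] at this
      simp only [map_add] at this
      rw [F0 n (by rw [h]; decide), F1 n (by rw [h]; decide), Res.smul 3 F2 n (by rw [h]; decide), F3 n (by rw [h]; decide),
        Res.smul 3 F4 n (by rw [h]; decide), Res.smul 3 F5 n (by rw [h]; decide), map_sub, map_zsmul, smul_eq_mul] at this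
      rw [map_neg]
      linarith
    · rw [F6 n h, map_neg, W3 n h, neg_zero]
  · rw [show a * b ^ 2 - a ^ 2 * w + c * w ^ 2 = a * b * b - a * a * w + c * w * w by ring]
    ext n
    by_cases h : (n : ZMod 7) = 2
    · have := c2 n h
      rw [key] at this
      simp only [map_add _ _ ((6 : ℤ) • (a * b * c) - w ^ 3), map_add _ _ ((3 : ℤ) • (a * a * c - c * c * w + b * w * w)),
        map_add _ _ ((3 : ℤ) • (b * c * c - b * b * w + a * w * w)), map_add _ _ (b * b * b + (3 : ℤ) • (a * c * c) - (6 : ℤ) • (a * b * w)),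
        map_add _ _ ((3 : ℤ) • (a * b * b - a * a * w + c * w * w)), map_add _ _ (c * c * c + (3 : ℤ) • (a * a * b) - (6 : ℤ) • (b * c * w))] at this
      rw [F0 n (by rw [h]; decide), F1 n (by rw [h]; decide), F3 n (by rw [h]; decide),
        Res.smul 3 F4 n (by rw [h]; decide), Res.smul 3 F5 n (by rw [h]; decide), Res.sub (Res.smul 6 F6) W3 n (by rw [h]; decide), map_zsmul, smul_eq_mul] at this
      rw [map_zero]
      linarith
    · rw [F2 n h, map_zero]
end

section
open PowerSeries

theorem prod_root {S : Type*} [CommRing S] [IsDomain S] {ω : S} (h : IsPrimitiveRoot ω 7) (y : S) :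
    ∏ k ∈ Finset.range 7, (1 - ω ^ k * y) = 1 - y ^ 7 := by
  classical
  have h1 := h.pow_sub_pow_eq_prod_sub_mul 1 y (by norm_num)
  have hinj : Set.InjOn (fun k => ω ^ k) (Finset.range 7 : Set ℕ) := by
    intro i hi j hj hij
    exact h.pow_inj (by simpa using hi) (by simpa using hj) hij
  have h2 : (Finset.range 7).image (fun k => ω ^ k) = Polynomial.nthRootsFinset 7 (1 : S) := by
    apply Finset.eq_of_subset_of_card_le
    · intro x hx
      obtain ⟨k, _, rfl⟩ := Finset.mem_image.1 hx
      rw [Polynomial.mem_nthRootsFinset (by norm_num)]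
      rw [← pow_mul, mul_comm, pow_mul, h.pow_eq_one, one_pow]
    · rw [Finset.card_image_of_injOn hinj, h.card_nthRootsFinset]; simp
  rw [one_pow] at h1
  rw [h1, ← h2, Finset.prod_image hinj]

abbrev mC : PowerSeries ℤ →+* PowerSeries ℂ := PowerSeries.map (Int.castRingHom ℂ)

theorem mC_X : mC X = X := by simp [mC]

def Bf (z : ℂ) (n : ℕ) : PowerSeries ℂ := ∏ k ∈ Finset.range 7, (1 - C z ^ (k * n) * X ^ n)

theorem primC {z : ℂ} (hz : IsPrimitiveRoot z 7) : IsPrimitiveRoot (C z : PowerSeries ℂ) 7 :=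
  hz.map_of_injective (C_injective)

theorem Bf_dvd {z : ℂ} (hz : IsPrimitiveRoot z 7) (n : ℕ) (h : 7 ∣ n) : Bf z n = (1 - X ^ n) ^ 7 := by
  rw [Bf, Finset.prod_eq_pow_card (b := 1 - X ^ n)]
  · simp
  · intro k _
    obtain ⟨m, rfl⟩ := h
    rw [show k * (7 * m) = 7 * (k * m) by ring, pow_mul, (primC hz).pow_eq_one, one_pow, one_mul]

theorem Bf_not {z : ℂ} (hz : IsPrimitiveRoot z 7) (n : ℕ) (h : ¬ 7 ∣ n) : Bf z n = 1 - X ^ (7 * n) := by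
  have h1 : IsPrimitiveRoot (C z ^ n : PowerSeries ℂ) 7 :=
    (primC hz).pow_of_coprime n ((Nat.coprime_comm.1 ((Nat.Prime.coprime_iff_not_dvd (by norm_num)).2 h)))
  have := prod_root h1 (X ^ n)
  rw [mul_comm 7 n, pow_mul, ← this, Bf]
  exact Finset.prod_congr rfl fun k _ => by rw [← pow_mul, mul_comm k n]

theorem rescale_qp (z : ℂ) (n : ℕ) :
    ∏ k ∈ Finset.range 7, rescale (z ^ k) (mC (qp n)) = ∏ i ∈ Finset.range n, Bf z (i + 1) := by
  simp only [Bf]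
  rw [Finset.prod_comm]
  refine Finset.prod_congr rfl fun k _ => ?_
  simp only [qp, map_prod, map_sub, map_one, map_pow, mC_X, rescale_X]
  refine Finset.prod_congr rfl fun i _ => ?_
  rw [mul_pow, pow_mul]

theorem norm_fin {z : ℂ} (hz : IsPrimitiveRoot z 7) (N : ℕ) :
    (∏ k ∈ Finset.range 7, rescale (z ^ k) (mC (qp (7 * N)))) * mC (expand 49 (by norm_num) (qp N)) =
     mC (expand 7 (by norm_num) (qp (7 * N))) * mC (expand 7 (by norm_num) (qp N)) ^ 7 := by
  rw [rescale_qp]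
  induction N with
  | zero => simp [qp]
  | succ N ih =>
    rw [show 7 * (N + 1) = 7 * N + 7 by ring]
    simp only [show ∀ m, qp (m + 7) = qp m * (1 - X ^ (m + 1)) * (1 - X ^ (m + 2)) * (1 - X ^ (m + 3))
      * (1 - X ^ (m + 4)) * (1 - X ^ (m + 5)) * (1 - X ^ (m + 6)) * (1 - X ^ (m + 7)) from
        fun m => by simp only [qp, Finset.prod_range_succ], qp_succ]
    have e : ∏ i ∈ Finset.range (7 * N + 7), Bf z (i + 1) = (∏ i ∈ Finset.range (7 * N), Bf z (i + 1))
       * Bf z (7 * N + 1) * Bf z (7 * N + 2) * Bf z (7 * N + 3) * Bf z (7 * N + 4) * Bf z (7 * N + 5)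
       * Bf z (7 * N + 6) * Bf z (7 * N + 7) := by
      simp only [Finset.prod_range_succ]
    rw [e, Bf_not hz _ (by omega : ¬ 7 ∣ 7 * N + 1), Bf_not hz _ (by omega : ¬ 7 ∣ 7 * N + 2),
      Bf_not hz _ (by omega : ¬ 7 ∣ 7 * N + 3), Bf_not hz _ (by omega : ¬ 7 ∣ 7 * N + 4),
      Bf_not hz _ (by omega : ¬ 7 ∣ 7 * N + 5), Bf_not hz _ (by omega : ¬ 7 ∣ 7 * N + 6),
      Bf_dvd hz _ (by omega : 7 ∣ 7 * N + 7)]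
    simp only [map_mul, map_sub, map_one, map_pow, expand_X, mC_X, ← pow_mul]
    rw [show 49 * (N + 1) = 7 * (7 * N + 7) by ring, show 7 * N + 7 = 7 * (N + 1) by ring]
    generalize (X : PowerSeries ℂ) ^ (7 * (N + 1)) = y0
    generalize (X : PowerSeries ℂ) ^ (7 * (7 * (N + 1))) = y1
    generalize (X : PowerSeries ℂ) ^ (7 * (7 * N + 1)) = y2
    generalize (X : PowerSeries ℂ) ^ (7 * (7 * N + 2)) = y3
    generalize (X : PowerSeries ℂ) ^ (7 * (7 * N + 3)) = y4
    generalize (X : PowerSeries ℂ) ^ (7 * (7 * N + 4)) = y5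
    generalize (X : PowerSeries ℂ) ^ (7 * (7 * N + 5)) = y6
    generalize (X : PowerSeries ℂ) ^ (7 * (7 * N + 6)) = y7
    linear_combination ((1 - y0) ^ 7 * (1 - y1) * (1 - y2) * (1 - y3) * (1 - y4) * (1 - y5) * (1 - y6) * (1 - y7)) * ih

theorem norm_inf {z : ℂ} (hz : IsPrimitiveRoot z 7) :
    (∏ k ∈ Finset.range 7, rescale (z ^ k) (mC (J 1))) * mC (J 49) = mC (J 7) ^ 8 := by
  ext n
  set I : Ideal (PowerSeries ℂ) := Ideal.span {X ^ (n + 1)} with hI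
  have hq : ∀ f g : PowerSeries ℂ, (X ^ (n + 1) ∣ f - g) → Ideal.Quotient.mk I f = Ideal.Quotient.mk I g := by
    intro f g h
    rw [Ideal.Quotient.eq, hI, Ideal.mem_span_singleton]; exact h
  have d0 : ∀ M, n ≤ M → (X : PowerSeries ℤ) ^ (n + 1) ∣ J 1 - qp M := fun M hM =>
    (pow_dvd_pow X (by omega)).trans (J1_dvd M)
  have d1 : ∀ (b : ℕ) (hb : b ≠ 0) M, n ≤ M → (X : PowerSeries ℂ) ^ (n + 1) ∣ mC (J b) - mC (expand b hb (qp M)) := by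
    intro b hb M hM
    have := map_dvd mC (map_dvd (expand b hb) (d0 M hM))
    rw [map_pow, expand_X, map_pow, map_pow, mC_X, map_sub, map_sub, ← J_expand] at this
    refine (pow_dvd_pow_of_dvd ?_ _).trans this
    exact dvd_pow_self _ hb
  have d2 : ∀ k : ℕ, (X : PowerSeries ℂ) ^ (n + 1) ∣ rescale (z ^ k) (mC (J 1)) - rescale (z ^ k) (mC (qp (7 * n))) := by
    intro k
    have := map_dvd (rescale (z ^ k)) (map_dvd mC (d0 (7 * n) (by omega)))
    rw [map_pow, map_pow, mC_X, rescale_X, map_sub, map_sub, mul_pow] at this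
    exact (dvd_mul_left _ _).trans this
  have key : Ideal.Quotient.mk I ((∏ k ∈ Finset.range 7, rescale (z ^ k) (mC (J 1))) * mC (J 49)) =
      Ideal.Quotient.mk I (mC (J 7) ^ 8) := by
    rw [map_mul, map_prod, Finset.prod_congr rfl fun k _ => hq _ _ (d2 k), ← map_prod,
      hq _ _ (d1 49 (by norm_num) n le_rfl), ← map_mul, norm_fin hz, map_mul, map_pow,
      ← hq _ _ (d1 7 (by norm_num) n le_rfl), ← hq _ _ (d1 7 (by norm_num) (7 * n) (by omega)), map_pow]
    ring
  rw [Ideal.Quotient.eq, hI, Ideal.mem_span_singleton, X_pow_dvd_iff] at key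
  have := key n (by omega)
  rw [map_sub, sub_eq_zero] at this
  exact this

theorem rescale_res {y : ℂ} (hy : y ^ 7 = 1) (r : ℕ) (f : PowerSeries ℤ) (hf : Res (r : ZMod 7) f) :
    rescale y (mC f) = C y ^ r * mC f := by
  ext n
  rw [coeff_rescale, ← map_pow, coeff_C_mul]
  by_cases h : (n : ZMod 7) = r
  · have h1 := (ZMod.natCast_eq_natCast_iff' n r 7).1 h
    rw [pow_eq_pow_mod n hy, pow_eq_pow_mod r hy, h1]
  · rw [coeff_map, hf n h]; simp
end

section
section
open Polynomial
theorem poly_norm {L : Type*} [Field L] (T : L) (x : ℕ → L)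
    (hinj : Set.InjOn x (Finset.range 7 : Set ℕ))
    (h : ∀ k, (x k) ^ 7 + 7 * (x k) ^ 6 + 21 * (x k) ^ 5 + 49 * (x k) ^ 4 + (147 + 7 * T) * (x k) ^ 3
      + (343 + 35 * T) * (x k) ^ 2 + (343 + 49 * T) * (x k) - T ^ 2 = 0) :
    ∏ k ∈ Finset.range 7, x k = T ^ 2 := by
  classical
  set p : L[X] := X ^ 7 + (C 7 * X ^ 6 + C 21 * X ^ 5 + C 49 * X ^ 4 + C (147 + 7 * T) * X ^ 3
      + C (343 + 35 * T) * X ^ 2 + C (343 + 49 * T) * X - C (T ^ 2)) with hp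
  have hd : p.degree = 7 := by rw [hp]; compute_degree!
  have hm : p.Monic := by rw [hp]; monicity!
  set q := ∏ k ∈ Finset.range 7, (Polynomial.X - Polynomial.C (x k)) with hq
  have hqm : q.Monic := Polynomial.monic_prod_X_sub_C _ _
  have hqd : q.degree = 7 := by
    rw [hq, Polynomial.degree_prod]; simp
  have hlt : (p - q).degree < 7 := by
    rw [← hd]
    exact Polynomial.degree_sub_lt (by rw [hd, hqd]) hm.ne_zero (by rw [hm.leadingCoeff, hqm.leadingCoeff])
  have hpq : p = q := by
    apply Polynomial.eq_of_degree_sub_lt_of_eval_finset_eq ((Finset.range 7).image x)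
    · rw [Finset.card_image_of_injOn hinj]; simpa using hlt
    · intro y hy
      obtain ⟨k, hk, rfl⟩ := Finset.mem_image.1 hy
      have e1 : Polynomial.eval (x k) p = 0 := by
        rw [hp]; simp only [Polynomial.eval_add, Polynomial.eval_sub, Polynomial.eval_mul, Polynomial.eval_pow, Polynomial.eval_X, Polynomial.eval_C]
        linear_combination h k
      rw [e1, hq, Polynomial.eval_prod]
      exact (Finset.prod_eq_zero hk (by simp)).symm
  have h0 := congrArg (Polynomial.eval 0) hpq
  rw [hp, hq, Polynomial.eval_prod] at h0
  simp [Finset.prod_range_succ] at h0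
  simp only [Finset.prod_range_succ, Finset.prod_range_zero]
  rw [one_mul]; exact h0.symm

end

open PowerSeries

def sg : PowerSeries ℤ := -(dis 0 (J 1) ^ 3 * dis 1 (J 1) + dis 1 (J 1) ^ 3 * dis 5 (J 1)
   + dis 5 (J 1) ^ 3 * dis 0 (J 1)) - 8 * wS ^ 4

theorem coeff_dis (r : ZMod 7) (f : PowerSeries ℤ) (n : ℕ) : coeff n (dis r f) = if (n : ZMod 7) = r then coeff n f else 0 := by
  rw [dis, coeff_mk]

theorem const_J1 : constantCoeff (J 1) = 1 := by
  rw [← coeff_zero_eq_constantCoeff_apply, J1_coeff 0 0 le_rfl]; simp [qp]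

theorem const_J (b : ℕ) (hb : b ≠ 0) : constantCoeff (J b) = 1 := by
  rw [J_expand b hb, constantCoeff_expand, const_J1]

theorem coeff_one_J1 : coeff 1 (J 1) = -1 := by
  rw [J1_coeff 1 1 le_rfl]; simp [qp, coeff_one]

theorem c0a : constantCoeff (dis 0 (J 1)) = 1 := by
  rw [← coeff_zero_eq_constantCoeff_apply, coeff_dis, if_pos (by decide), coeff_zero_eq_constantCoeff_apply, const_J1]
theorem c0b : constantCoeff (dis 1 (J 1)) = 0 := by
  rw [← coeff_zero_eq_constantCoeff_apply, coeff_dis, if_neg (by decide)]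
theorem c0c : constantCoeff (dis 5 (J 1)) = 0 := by
  rw [← coeff_zero_eq_constantCoeff_apply, coeff_dis, if_neg (by decide)]
theorem c1b : coeff 1 (dis 1 (J 1)) = -1 := by
  rw [coeff_dis, if_pos (by decide), coeff_one_J1]
theorem c0w : constantCoeff wS = 0 := by simp [wS]

theorem coeff_one_sg : coeff 1 sg = 1 := by
  have h8 : (8 : PowerSeries ℤ) = C 8 := by simp
  rw [sg, h8]
  simp [coeff_one_mul, coeff_one_pow, c0a, c0b, c0c, c1b, c0w]

theorem w_ne : wS ≠ 0 := by
  rw [wS]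
  refine mul_ne_zero (pow_ne_zero _ X_ne_zero) fun h => ?_
  have := const_J 49 (by norm_num)
  rw [h] at this; simp at this

theorem mC_inj : Function.Injective mC := map_injective _ Int.cast_injective

theorem sg_sq : sg ^ 2 = (X * J 7 ^ 4) ^ 2 := by
  obtain ⟨ha, hb⟩ := rels
  have hJ := J1_dis
  have ra := dis_res 0 (J 1)
  have rb := dis_res 1 (J 1)
  have rc := dis_res 5 (J 1)
  have rw' := wS_res
  have z := Complex.isPrimitiveRoot_exp 7 (by norm_num)
  generalize Complex.exp _ = ζ at z
  let L := FractionRing (PowerSeries ℂ)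
  let i : PowerSeries ℂ →+* L := algebraMap _ _
  have hi : Function.Injective i := IsFractionRing.injective _ _
  let i' : PowerSeries ℤ →+* L := i.comp mC
  have hi' : Function.Injective i' := hi.comp mC_inj
  have hZ : IsPrimitiveRoot (i (C ζ)) 7 := (primC z).map_of_injective hi
  set Z := i (C ζ) with hZdef
  set A := i' (dis 0 (J 1)) with hA
  set B := i' (dis 1 (J 1)) with hB
  set D := i' (dis 5 (J 1)) with hD
  set W := i' wS with hW
  have hW0 : W ≠ 0 := fun h => w_ne (hi' (by rw [← hW, h, map_zero]))
  have r1 : A * B * D = - W ^ 3 := by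
    have := congrArg i' ha
    simpa only [map_mul, map_neg, map_pow] using this
  have r2 : A * B ^ 2 - A ^ 2 * W + D * W ^ 2 = 0 := by
    have := congrArg i' hb
    simpa only [map_mul, map_add, map_sub, map_pow, map_zero] using this
  set a := A / W with ha'
  set b := B / W with hb'
  set c := D / W with hc'
  have eA : A = a * W := by rw [ha', div_mul_cancel₀ _ hW0]
  have eB : B = b * W := by rw [hb', div_mul_cancel₀ _ hW0]
  have eD : D = c * W := by rw [hc', div_mul_cancel₀ _ hW0]
  have s1 : a * b * c = -1 := by
    apply mul_right_cancel₀ (pow_ne_zero 3 hW0)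
    rw [eA, eB, eD] at r1
    linear_combination r1
  have s2 : c = a ^ 2 - a * b ^ 2 := by
    apply mul_right_cancel₀ (pow_ne_zero 3 hW0)
    rw [eA, eB, eD] at r2
    linear_combination r2
  set T := -(a ^ 3 * b + b ^ 3 * c + c ^ 3 * a) - 8 with hT
  let x : ℕ → L := fun k => (Z ^ k) ^ 5 * a + (Z ^ k) ^ 6 * b + (Z ^ k) ^ 3 * c - 1
  have hy : ∀ k, (Z ^ k) ^ 7 = 1 := fun k => by rw [← pow_mul, mul_comm, pow_mul, hZ.pow_eq_one, one_pow]
  have hroot : ∀ k, (x k) ^ 7 + 7 * (x k) ^ 6 + 21 * (x k) ^ 5 + 49 * (x k) ^ 4 + (147 + 7 * T) * (x k) ^ 3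
      + (343 + 35 * T) * (x k) ^ 2 + (343 + 49 * T) * (x k) - T ^ 2 = 0 := by
    intro k
    have h7 := hy k
    apply alg1 ((Z ^ k) ^ 5 * a) ((Z ^ k) ^ 6 * b) ((Z ^ k) ^ 3 * c) _ _ T (x k) _ rfl
    · generalize Z ^ k = y at h7
      have h17 : y ^ 17 = y ^ 3 := by rw [show y ^ 17 = (y ^ 7) ^ 2 * y ^ 3 by ring, h7]; ring
      have h10 : y ^ 10 = y ^ 3 := by rw [show y ^ 10 = (y ^ 7) * y ^ 3 by ring, h7]; ring
      linear_combination y ^ 3 * s2 - a ^ 2 * h10 + a * b ^ 2 * h17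
    · generalize Z ^ k = y at h7
      have h14 : y ^ 14 = 1 := by rw [show y ^ 14 = (y ^ 7) ^ 2 by ring, h7]; ring
      linear_combination s1 + a * b * c * h14
    · generalize Z ^ k = y at h7
      have h14 : y ^ 14 = 1 := by rw [show y ^ 14 = (y ^ 7) ^ 2 by ring, h7]; ring
      have h21 : y ^ 21 = 1 := by rw [show y ^ 21 = (y ^ 7) ^ 3 by ring, h7]; ring
      linear_combination hT + (a ^ 3 * b + b ^ 3 * c) * h21 + c ^ 3 * a * h14
  have hres : ∀ k, i (rescale (ζ ^ k) (mC (J 1))) = (Z ^ k) ^ 2 * W * x k := by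
    intro k
    have h7 := hy k
    have hz7 : (ζ ^ k) ^ 7 = 1 := by rw [← pow_mul, mul_comm, pow_mul, z.pow_eq_one, one_pow]
    have e : i (rescale (ζ ^ k) (mC (J 1))) = A + Z ^ k * B + (Z ^ k) ^ 5 * D - (Z ^ k) ^ 2 * W := by
      conv_lhs => rw [hJ]
      rw [map_sub, map_add, map_add, map_sub, map_add, map_add, rescale_res hz7 0 _ ra,
        rescale_res hz7 1 _ (by simpa using rb), rescale_res hz7 5 _ rc, rescale_res hz7 2 _ rw']
      simp only [map_sub, map_add, map_mul, map_pow]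
      simp only [hA, hB, hD, hW, hZdef, i', RingHom.comp_apply]
      ring
    rw [e, eA, eB, eD]
    simp only [x]
    generalize Z ^ k = y at h7
    linear_combination (-(a * W) - y * b * W) * h7
  have hinj : Set.InjOn x (Finset.range 7 : Set ℕ) := by
    intro k hk l hl hkl
    have hk' : k < 7 := by simpa using hk
    have hl' : l < 7 := by simpa using hl
    have h1 : i (C (ζ ^ l) ^ 2 * rescale (ζ ^ k) (mC (J 1))) = i (C (ζ ^ k) ^ 2 * rescale (ζ ^ l) (mC (J 1))) := by
      rw [map_mul, map_mul, hres, hres, hkl]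
      simp only [map_pow, hZdef]; ring
    have h2 := congrArg constantCoeff (hi h1)
    have hc : ∀ y : ℂ, constantCoeff (rescale y (mC (J 1))) = 1 := by
      intro y
      rw [← coeff_zero_eq_constantCoeff_apply, coeff_rescale, coeff_map, coeff_zero_eq_constantCoeff_apply, const_J1]
      simp
    rw [map_mul, map_mul, hc, hc] at h2
    simp only [map_pow, constantCoeff_C, mul_one] at h2
    have h3 : ζ ^ l = ζ ^ k := by
      have e : ∀ m : ℕ, ζ ^ m = ((ζ ^ m) ^ 2) ^ 4 := by
        intro m
        have : (ζ ^ m) ^ 7 = 1 := by rw [← pow_mul, mul_comm, pow_mul, z.pow_eq_one, one_pow]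
        linear_combination -(ζ ^ m) * this
      rw [e l, e k, h2]
    exact (z.pow_inj hl' hk' h3).symm
  have hprod := poly_norm T x hinj hroot
  have hn := congrArg i (norm_inf z)
  rw [map_mul, map_prod, Finset.prod_congr rfl fun k _ => hres k, Finset.prod_mul_distrib, hprod,
    Finset.prod_mul_distrib] at hn
  have hzp : ∏ k ∈ Finset.range 7, (Z ^ k) ^ 2 = 1 := by
    have : ∏ k ∈ Finset.range 7, (Z ^ k) ^ 2 = (Z ^ 7) ^ 6 := by
      simp only [Finset.prod_range_succ, Finset.prod_range_zero]; ring
    rw [this, hZ.pow_eq_one, one_pow]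
  rw [hzp, one_mul, Finset.prod_const, Finset.card_range, map_pow] at hn
  have hsg : i' sg = T * W ^ 4 := by
    simp only [sg, map_sub, map_neg, map_add, map_mul, map_pow, map_ofNat]
    rw [← hA, ← hB, ← hD, ← hW, eA, eB, eD, hT]
    ring
  have hWJ : W = i' X ^ 2 * i (mC (J 49)) := by
    rw [hW, wS, map_mul, map_pow]; rfl
  apply hi'
  rw [map_pow, hsg, map_pow, map_mul, map_pow]
  have h7 : i' (J 7) = i (mC (J 7)) := rfl
  rw [h7]
  have : (T * W ^ 4) ^ 2 = (W ^ 7 * T ^ 2 * i (mC (J 49))) * i' X ^ 2 := by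
    linear_combination (W ^ 7 * T ^ 2) * hWJ
  rw [this, hn]; ring

theorem sg_eq : sg = X * J 7 ^ 4 := by
  rcases sq_eq_sq_iff_eq_or_eq_neg.1 sg_sq with h | h
  · exact h
  · exfalso
    have h1 := coeff_one_sg
    rw [h, map_neg, coeff_one_mul] at h1
    simp [const_J 7 (by norm_num)] at h1
end

def ph : LaurentSeries ℤ →+* LaurentSeries ℤ :=
  HahnSeries.embDomainRingHom (AddMonoidHom.mulLeft (7 : ℤ))
    (fun a b h => by simpa using h) (fun a b => by simp)

theorem ph_mul7 (g : LaurentSeries ℤ) (n : ℤ) : (ph g).coeff (7 * n) = g.coeff n :=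
  HahnSeries.embDomain_coeff

theorem ph_ne (g : LaurentSeries ℤ) (n : ℤ) (h : (ph g).coeff n ≠ 0) : ∃ m, n = 7 * m := by
  by_contra hn
  apply h
  apply HahnSeries.embDomain_notin_image_support
  rintro ⟨m, -, hm⟩
  exact hn ⟨m, hm.symm⟩

theorem ofPS_neg (f : PowerSeries ℤ) (n : ℤ) (h : n < 0) : (HahnSeries.ofPowerSeries ℤ ℤ f).coeff n = 0 := by
  rw [HahnSeries.ofPowerSeries_apply]
  apply HahnSeries.embDomain_notin_image_support
  rintro ⟨m, -, hm⟩
  have : (m : ℤ) = n := hm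
  omega

theorem ph_of (f : PowerSeries ℤ) : ph (HahnSeries.ofPowerSeries ℤ ℤ f)
    = HahnSeries.ofPowerSeries ℤ ℤ (PowerSeries.expand 7 (by norm_num) f) := by
  ext n
  by_cases hd : ∃ m, n = 7 * m
  · obtain ⟨m, rfl⟩ := hd
    rw [ph_mul7]
    rcases lt_or_ge m 0 with h | h
    · rw [ofPS_neg _ _ h, ofPS_neg _ _ (by omega)]
    · lift m to ℕ using h
      have : (7 * (m : ℤ)) = ((7 * m : ℕ) : ℤ) := by push_cast; rfl
      rw [this, HahnSeries.ofPowerSeries_apply_coeff, HahnSeries.ofPowerSeries_apply_coeff, PowerSeries.coeff_expand_mul]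
  · have h0 : (ph (HahnSeries.ofPowerSeries ℤ ℤ f)).coeff n = 0 := by
      by_contra h; exact hd (ph_ne _ _ h)
    rw [h0]
    rcases lt_or_ge n 0 with h | h
    · rw [ofPS_neg _ _ h]
    · lift n to ℕ using h
      rw [HahnSeries.ofPowerSeries_apply_coeff, PowerSeries.coeff_expand_of_not_dvd]
      rintro ⟨m, hm⟩
      exact hd ⟨m, by exact_mod_cast hm⟩

theorem U_mul (U : LaurentSeries ℤ → LaurentSeries ℤ)
    (hU : ∀ (f : LaurentSeries ℤ) (n : ℤ), (U f).coeff n = f.coeff (7 * n))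
    (g f : LaurentSeries ℤ) : U (ph g * f) = g * U f := by
  ext n
  rw [hU, HahnSeries.coeff_mul, HahnSeries.coeff_mul]
  symm
  apply Finset.sum_of_injOn (fun p : ℤ × ℤ => (7 * p.1, 7 * p.2))
  · rintro ⟨a, b⟩ - ⟨c, d⟩ - h
    simp only [Prod.mk.injEq] at h ⊢
    omega
  · rintro ⟨a, b⟩ h
    simp only [Finset.mem_coe, Finset.mem_antidiagonal, HahnSeries.mem_support] at h ⊢
    rw [ph_mul7, ← hU]
    refine ⟨h.1, h.2.1, ?_⟩
    have := h.2.2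
    omega
  · rintro ⟨a, b⟩ h hn
    by_contra h0
    obtain ⟨m, rfl⟩ := ph_ne g a (left_ne_zero_of_mul h0)
    simp only [Finset.mem_antidiagonal, HahnSeries.mem_support] at h
    apply hn
    have hb : b = 7 * (n - m) := by omega
    subst hb
    refine ⟨(m, n - m), ?_, rfl⟩
    simp only [Finset.mem_coe, Finset.mem_antidiagonal, HahnSeries.mem_support]
    refine ⟨?_, ?_, by omega⟩
    · rw [← ph_mul7]; exact h.1
    · rw [hU]; exact h.2.1
  · rintro ⟨a, b⟩ h
    simp only [ph_mul7, hU]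

theorem aPoly_map {R S : Type*} [CommRing R] [CommRing S] (f : R →+* S) (l : ℕ) (x : R) :
    f (aPoly l x) = aPoly l (f x) := by
  unfold aPoly
  split <;> simp only [map_add, map_mul, map_pow, map_ofNat, map_zero]

theorem key (T : LaurentSeries ℤ) (hT : T * HahnSeries.ofPowerSeries ℤ ℤ ((J 1) ^ 4)
        = HahnSeries.ofPowerSeries ℤ ℤ (PowerSeries.X * (J 7) ^ 4)) :
    T ^ 7 = ∑ l ∈ Finset.range 7, aPoly l (ph T) * T ^ l := by
  have e49 : PowerSeries.expand 7 (by norm_num) (J 7) = J 49 := by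
    rw [J_expand 7 (by norm_num), J_expand 49 (by norm_num), ← PowerSeries.expand_mul]
  have hV := congrArg ph hT
  rw [map_mul, ph_of, ph_of, map_mul, map_pow, map_pow, map_pow, PowerSeries.expand_X, ← J_expand 7 (by norm_num), e49] at hV
  obtain ⟨ha, hb⟩ := rels
  have hJ := J1_dis
  have hs := sg_eq
  rw [sg] at hs
  have hw : wS = PowerSeries.X ^ 2 * J 49 := rfl
  have hw0 := w_ne
  let L := FractionRing (LaurentSeries ℤ)
  let k : LaurentSeries ℤ →+* L := algebraMap _ _
  have hk : Function.Injective k := IsFractionRing.injective _ _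
  let i : PowerSeries ℤ →+* L := k.comp (HahnSeries.ofPowerSeries ℤ ℤ)
  have hi : Function.Injective i := hk.comp HahnSeries.ofPowerSeries_injective
  have jne : ∀ b : ℕ, b ≠ 0 → i (J b) ≠ 0 := by
    intro b hb h
    have h0 : J b = 0 := hi (by rw [h, map_zero])
    have := const_J b hb
    rw [h0] at this; simp at this
  have xne : i PowerSeries.X ≠ 0 := fun h => PowerSeries.X_ne_zero (R := ℤ) (hi (by rw [h, map_zero]))
  have hT1 : k T * i (J 1) ^ 4 = i PowerSeries.X * i (J 7) ^ 4 := by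
    have := congrArg k hT
    rw [map_mul] at this
    simpa only [map_mul, map_pow, i, RingHom.comp_apply] using this
  have hV1 : k (ph T) * i (J 7) ^ 4 = i PowerSeries.X ^ 7 * i (J 49) ^ 4 := by
    have := congrArg k hV
    rw [map_mul] at this
    simpa only [map_mul, map_pow, i, RingHom.comp_apply] using this
  have r1 := congrArg i ha
  have r2 := congrArg i hb
  have r3 := congrArg i hJ
  have r4 := congrArg i hs
  have r5 := congrArg i hw
  simp only [map_mul, map_add, map_sub, map_neg, map_pow, map_zero, map_ofNat] at r1 r2 r3 r4 r5
  have hW0 : i wS ≠ 0 := fun h => hw0 (hi (by rw [h, map_zero]))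
  have j1 := jne 1 (by norm_num)
  have j7 := jne 7 (by norm_num)
  apply hk
  rw [map_pow, map_sum]
  simp only [map_mul, map_pow, aPoly_map]
  clear ha hb hJ hs hw hw0 hT hV
  generalize k T = t at *
  generalize k (ph T) = V at *
  generalize i (dis 0 (J 1)) = A at *
  generalize i (dis 1 (J 1)) = B at *
  generalize i (dis 5 (J 1)) = D at *
  generalize i wS = W at *
  generalize i (J 1) = E at *
  generalize i (J 7) = F at *
  generalize i (J 49) = G at *
  generalize i PowerSeries.X = Q at *
  obtain ⟨a, rfl⟩ : ∃ a, A = a * W := ⟨A / W, (div_mul_cancel₀ _ hW0).symm⟩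
  obtain ⟨b, rfl⟩ : ∃ a, B = a * W := ⟨B / W, (div_mul_cancel₀ _ hW0).symm⟩
  obtain ⟨c, rfl⟩ : ∃ a, D = a * W := ⟨D / W, (div_mul_cancel₀ _ hW0).symm⟩
  have s1 : a * b * c = -1 := by
    apply mul_right_cancel₀ (pow_ne_zero 3 hW0)
    linear_combination r1
  have s2 : c = a ^ 2 - a * b ^ 2 := by
    apply mul_right_cancel₀ (pow_ne_zero 3 hW0)
    linear_combination r2
  have hx : E = (a + b + c - 1) * W := by rw [r3]; ring
  have hS : (-(a ^ 3 * b + b ^ 3 * c + c ^ 3 * a) - 8) * W ^ 4 = Q * F ^ 4 := by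
    linear_combination r4
  have hS0 : Q * F ^ 4 ≠ 0 := mul_ne_zero xne (pow_ne_zero _ j7)
  refine alg2 (-(a ^ 3 * b + b ^ 3 * c + c ^ 3 * a) - 8) (a + b + c - 1) t V ?_ ?_ ?_ ?_
    (alg1 a b c s2 s1 _ _ rfl rfl)
  · intro h; rw [h, zero_mul] at hS; exact hS0 hS.symm
  · intro h; rw [h, zero_mul] at hx; exact j1 hx
  · apply mul_right_cancel₀ (pow_ne_zero 4 hW0)
    rw [hS, ← hT1, hx]; ring
  · apply mul_right_cancel₀ (pow_ne_zero 4 hW0)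
    rw [mul_assoc, hS, r5]
    linear_combination Q * hV1

/-- for every Laurent series `u` with integer coefficients and every `j : ℤ`,
`U_7(u·t^j) = ∑_{l=0}^{6} a_l(t)·U_7(u·t^{j+l−7})`, where `t = q·J_7^4/J_1^4` (a unit of the
ring of Laurent series) and `U_7` is the operator sending `∑ f(n) qⁿ` to `∑ f(7n) qⁿ`. -/
theorem stmt5
    (T : (LaurentSeries ℤ)ˣ)
    (hT : (T : LaurentSeries ℤ) * HahnSeries.ofPowerSeries ℤ ℤ ((J 1) ^ 4)
        = HahnSeries.ofPowerSeries ℤ ℤ (PowerSeries.X * (J 7) ^ 4))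
    (U : LaurentSeries ℤ → LaurentSeries ℤ)
    (hU : ∀ (f : LaurentSeries ℤ) (n : ℤ), (U f).coeff n = f.coeff (7 * n))
    (u : LaurentSeries ℤ) (j : ℤ) :
    U (u * ↑(T ^ j)) =
      ∑ l ∈ Finset.range 7,
        aPoly l (T : LaurentSeries ℤ) * U (u * ↑(T ^ (j + (l : ℤ) - 7))) := by
  have hk := key T hT
  have hadd : ∀ f g, U (f + g) = U f + U g := by
    intro f g; ext n; simp [hU]
  have hz : U 0 = 0 := by ext n; simp [hU]
  let U' : LaurentSeries ℤ →+ LaurentSeries ℤ := ⟨⟨U, hz⟩, hadd⟩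
  have e1 : ((T ^ j : (LaurentSeries ℤ)ˣ) : LaurentSeries ℤ) = ↑(T ^ (j - 7)) * (T : LaurentSeries ℤ) ^ 7 := by
    rw [← Units.val_pow_eq_pow_val, ← Units.val_mul, ← zpow_natCast, ← zpow_add]
    congr 2; push_cast; ring
  have e2 : ∀ l : ℕ, ((T ^ (j + (l : ℤ) - 7) : (LaurentSeries ℤ)ˣ) : LaurentSeries ℤ)
      = ↑(T ^ (j - 7)) * (T : LaurentSeries ℤ) ^ l := by
    intro l
    rw [← Units.val_pow_eq_pow_val, ← Units.val_mul, ← zpow_natCast, ← zpow_add]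
    congr 2; ring
  rw [e1, hk, Finset.mul_sum, Finset.mul_sum]
  have := map_sum U' (fun l => u * (↑(T ^ (j - 7)) * (aPoly l (ph T) * (T : LaurentSeries ℤ) ^ l))) (Finset.range 7)
  refine this.trans (Finset.sum_congr rfl fun l _ => ?_)
  rw [e2, ← U_mul U hU, aPoly_map]
  change U _ = U _
  congr 1
  ring
end
end
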